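/- arXiv:2402.17222 — 5 statements merged into one kernel-verified Lean document; each statement's English description precedes it below -/
import Mathlib

section
/- Consider the system ẋ = f(x,z,θ,d), ż = Γ e^{-z} (V(x,z) − ε)⁺, where (x,z) ∈ ℝⁿ × ℝ is the state, θ ∈ Θ ⊆ ℝᵖ and d ∈ D ⊆ ℝˡ are disturbances, Γ, ε > 0 are constants, f : ℝⁿ × ℝ × Θ × D → ℝⁿ is locally Lipschitz with f(0,z,θ,0) = 0 for all (z,θ) ∈ ℝ × Θ, and V ∈ C¹(ℝⁿ × ℝ) satisfies V(0,z) = 0 for all z ∈ ℝ and V(x,z) > 0 for all x ≠ 0, z ∈ ℝ. Assume: (i) for every M > 0 the set {(x,z) ∈ ℝⁿ × [−M,M] : V(x,z) ≤ M} is bounded; (ii) there exist functions κ, λ of class K∞ and constants a, b, c > 0 such that for all (x,z) ∈ ℝⁿ × ℝ, θ ∈ Θ, d ∈ D: (∂V/∂x)(x,z)·f(x,z,θ,d) + Γ e^{-z} (∂V/∂z)(x,z) (V(x,z) − ε)⁺ ≤ −c V(x,z) + a (|d|² + ((|θ| − b − λ(e^z))⁺)²)/(1 + κ(e^z)). Then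 there exists a continuous function B : ℝⁿ × ℝ × ℝ≥0 × ℝ≥0 → ℝ≥0 such that for every initial condition (x₀,z₀) ∈ ℝⁿ × ℝ and every Lebesgue-measurable essentially bounded d : ℝ≥0 → D and θ : ℝ≥0 → Θ, the unique maximal solution (x(t),z(t)) of the system with (x(0),z(0)) = (x₀,z₀) exists for all t ≥ 0 and satisfies: limsup_{t→∞} V(x(t),z(t)) ≤ ε; z₀ ≤ z(t) ≤ lim_{s→∞} z(s) ≤ B(x₀,z₀,‖d‖_∞,‖θ‖_∞) for all t ≥ 0; |x(t)| ≤ B(x₀,z₀,‖d‖_∞,‖θ‖_∞) for all t ≥ 0; V(x(t),z(t)) ≤ e^{−ct} V(x₀,z₀) + a (‖d‖_∞² + ((‖θ‖_∞ − b − λ(e^{z₀}))⁺)²)/(c(1 + κ(e^{z₀}))) for all t ≥ 0; and limsup_{t→∞} V(x(t),z(t)) ≤ a ((limsup_{t→∞}|d(t)|)² + ((limsup_{t→∞}|θ(t)| − b − λ(e^{lim_{t→∞} z(t)}))⁺)²)/(c(1 + κ(e^{lim_{t→∞} z(t)}))). -/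
/-!
Write `y = (x, z)` and `ω = (θ, d)`, so that the system reads `y' = F(y, ω(t))` with `F` locally
Lipschitz (`field`), and write the right-hand side of the dissipation inequality as `-c V` plus a
`gain`, which is increasing in the disturbance levels and decreasing in `z`.

*Comparison.* Along solutions `z` is nondecreasing (`Deadzone.z_mono`). On a time interval starting
at `s`, the gain is therefore at most its value `g` at `z(s)` and at the disturbance bounds, and
Gronwall's argument applied to the absolutely continuous function `V ∘ y` gives
`V(y(t)) ≤ e^{-c(t-s)} V(y(s)) + (g / c)(1 - e^{-c(t-s)})` (`Deadzone.V_le`). With `s = 0` this is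
the transient estimate on `V`.

*A priori bound.* The gain tends to `0` as `z → ∞`, so there is a level `Z` at which it is at most
`c ε`. If `z` crosses that level, the comparison estimate makes `(V - ε)⁺` decay exponentially from
then on, so that the integral of `ż` is bounded. Hence `z`, then `V`, then (by boundedness of
sublevel sets) `x` are bounded, locally uniformly in the data and independently of the time horizon
(`Deadzone.apriori`); a partition of unity turns this into a continuous bound `B`
(`Deadzone.exists_continuous_bound`). Together with Carathéodory's existence theorem for a truncated
field, the bound yields global existence (`exists_isSol_of_apriori`).

*Uniqueness.* Continuous solutions are unique by a weighted supremum norm estimate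
(`IsSol.unique`). Competitors in the statement only satisfy the integral equations, whose integrals
are `0` by convention where the integrand is not integrable; `unique_of_integral_eq` shows that this
cannot happen.

*Asymptotics.* `z` is monotone and bounded, hence convergent. Since `V` grows at a bounded rate, an
excursion of `V` above `ε + η` increases `z` by a fixed amount, which is impossible at late times
(`Deadzone.eventually_V_le`). The last estimate follows by applying the comparison estimate from a
late time on, where disturbances and `z` are `η`-close to their limiting values, and letting `η → 0`
(`Deadzone.limsup_V_le`).
-/

open Set Filter MeasureTheory Topology
open scoped ENNReal

noncomputable section

/-- A function of class `K∞`: continuous, increasing, vanishing at `0`, unbounded. -/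
def ClassKInf (κ : ℝ → ℝ) : Prop :=
  ContinuousOn κ (Set.Ici 0) ∧ StrictMonoOn κ (Set.Ici 0) ∧ κ 0 = 0 ∧
    Filter.Tendsto κ Filter.atTop Filter.atTop

/-- The essential supremum norm `‖d‖_∞` of a signal over `[0,∞)`. -/
def essNorm {E : Type*} [NormedAddCommGroup E] [MeasurableSpace E] (d : ℝ → E) : ℝ :=
  (eLpNorm d ⊤ (volume.restrict (Set.Ici (0:ℝ)))).toReal


/-! ### Carathéodory equations with globally Lipschitz right-hand side -/

/-- A locally Lipschitz field is bounded, and Lipschitz in the state, on bounded sets. -/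
theorem exists_lipschitz_bound {Y P : Type*} [NormedAddCommGroup Y] [ProperSpace Y]
    [NormedAddCommGroup P] [ProperSpace P] (F : Y → P → Y)
    (hF : LocallyLipschitz fun q : Y × P => F q.1 q.2) (R r : ℝ) :
    ∃ L > 0, ∃ M > 0, (∀ y y' w, ‖y‖ ≤ R → ‖y'‖ ≤ R → ‖w‖ ≤ r →
      ‖F y w - F y' w‖ ≤ L * ‖y - y'‖) ∧ ∀ y w, ‖y‖ ≤ R → ‖w‖ ≤ r → ‖F y w‖ ≤ M := by
  have hK : IsCompact (Metric.closedBall (0 : Y) R ×ˢ Metric.closedBall (0 : P) r) :=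
    (isCompact_closedBall _ _).prod (isCompact_closedBall _ _)
  obtain ⟨K, hKl⟩ := (hF.locallyLipschitzOn (s := Metric.closedBall (0 : Y) R ×ˢ
    Metric.closedBall (0 : P) r)).exists_lipschitzOnWith_of_compact hK
  obtain ⟨M, hM⟩ := hK.exists_bound_of_continuousOn hF.continuous.continuousOn
  refine ⟨K + 1, by positivity, max M 1, by positivity, ?_, ?_⟩
  · intro y y' w hy hy' hw
    have h := hKl.dist_le_mul (y, w) (by simp [hy, hw]) (y', w) (by simp [hy', hw])
    rw [dist_prod_same_right, dist_eq_norm, dist_eq_norm] at h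
    nlinarith [norm_nonneg (y - y')]
  · intro y w hy hw
    exact (hM (y, w) (by simp [hy, hw])).trans (le_max_left _ _)

theorem integral_exp_weight_le {α t : ℝ} (hα : 0 < α) :
    ∫ s in (0 : ℝ)..t, Real.exp (α * s) ≤ Real.exp (α * t) / α := by
  rw [intervalIntegral.integral_comp_mul_left _ hα.ne', integral_exp]
  simp only [mul_zero, Real.exp_zero, smul_eq_mul]
  rw [div_eq_inv_mul]
  have : 0 < α⁻¹ := by positivity
  nlinarith

theorem intervalIntegrable_of_ae_bound {E : Type*} [NormedAddCommGroup E] {g : ℝ → E}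
    {a b M : ℝ} (hm : AEStronglyMeasurable g (volume.restrict (uIoc a b)))
    (hb : ∀ᵐ s, s ∈ uIoc a b → ‖g s‖ ≤ M) : IntervalIntegrable g volume a b := by
  rw [intervalIntegrable_iff]
  have : IsFiniteMeasure (volume.restrict (uIoc a b)) := ⟨by simp [uIoc]⟩
  refine Integrable.of_bound hm M ?_
  rwa [ae_restrict_iff' measurableSet_uIoc]

/-- Carathéodory existence on the half line, for a bounded, globally Lipschitz right-hand side. The
solution is sought as `y₀ + e^{αs} u(s)` with `u` bounded and continuous; for `α = 2L` the Picard
operator becomes a contraction of ratio `1/2` in the supremum norm of `u`. -/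
theorem exists_global_solution {E : Type*} [NormedAddCommGroup E] [NormedSpace ℝ E]
    [CompleteSpace E] (G : ℝ → E → E) (L M : ℝ) (hL : 0 < L)
    (hlip : ∀ s y y', ‖G s y - G s y'‖ ≤ L * ‖y - y'‖) (hbd : ∀ s y, ‖G s y‖ ≤ M)
    (hmeas : ∀ y : ℝ → E, Continuous y → AEStronglyMeasurable (fun s => G s (y s)) volume)
    (y₀ : E) :
    ∃ y : ℝ → E, Continuous y ∧ ∀ t, 0 ≤ t → y t = y₀ + ∫ s in (0 : ℝ)..t, G s (y s) := by
  set α : ℝ := 2 * L with hα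
  have hα0 : 0 < α := by positivity
  have hM : 0 ≤ M := (norm_nonneg _).trans (hbd 0 0)
  let Y : BoundedContinuousFunction ℝ E → ℝ → E := fun u s => y₀ + Real.exp (α * s) • u s
  have hYc : ∀ u, Continuous (Y u) := fun u => by
    have := u.continuous
    fun_prop
  have hint : ∀ u a b, IntervalIntegrable (fun s => G s (Y u s)) volume a b := fun u a b =>
    intervalIntegrable_of_ae_bound (hmeas _ (hYc u)).restrict (.of_forall fun s _ => hbd s _)
  let φ : BoundedContinuousFunction ℝ E → ℝ → E := fun u t =>
    Real.exp (-(α * max t 0)) • ∫ s in (0 : ℝ)..(max t 0), G s (Y u s)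
  have hφc : ∀ u, Continuous (φ u) := fun u => by
    have h1 := intervalIntegral.continuous_primitive (hint u) 0
    have h2 : Continuous fun t : ℝ => max t 0 := by fun_prop
    exact (by fun_prop : Continuous fun t : ℝ => Real.exp (-(α * max t 0))).smul (h1.comp h2)
  have hφb : ∀ u t, ‖φ u t‖ ≤ M / α := fun u t => by
    have ht : 0 ≤ max t 0 := le_max_right _ _
    have h1 : ‖∫ s in (0 : ℝ)..(max t 0), G s (Y u s)‖ ≤ M * |max t 0 - 0| :=
      intervalIntegral.norm_integral_le_of_norm_le_const fun s _ => hbd s _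
    rw [sub_zero, abs_of_nonneg ht] at h1
    rw [norm_smul, Real.norm_of_nonneg (Real.exp_pos _).le, Real.exp_neg, le_div_iff₀ hα0,
      inv_mul_eq_div, div_mul_eq_mul_div, div_le_iff₀ (Real.exp_pos _)]
    have h2 := Real.add_one_le_exp (α * max t 0)
    nlinarith [mul_le_mul_of_nonneg_right h1 hα0.le]
  let Φ : BoundedContinuousFunction ℝ E → BoundedContinuousFunction ℝ E := fun u =>
    BoundedContinuousFunction.ofNormedAddCommGroup (φ u) (hφc u) (M / α) (hφb u)
  have hcontr : ContractingWith (1 / 2) Φ := by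
    refine ⟨by norm_num [← NNReal.coe_lt_coe], LipschitzWith.of_dist_le_mul fun u v => ?_⟩
    rw [BoundedContinuousFunction.dist_le (by positivity)]
    intro t
    change dist (φ u t) (φ v t) ≤ _
    have ht : 0 ≤ max t 0 := le_max_right _ _
    set τ := max t 0
    have h1 : ‖∫ s in (0 : ℝ)..τ, (G s (Y u s) - G s (Y v s))‖ ≤
        ∫ s in (0 : ℝ)..τ, L * dist u v * Real.exp (α * s) := by
      refine intervalIntegral.norm_integral_le_of_norm_le ht (.of_forall fun s _ => ?_)
        (by apply Continuous.intervalIntegrable; fun_prop)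
      refine (hlip _ _ _).trans ?_
      have : Y u s - Y v s = Real.exp (α * s) • (u s - v s) := by
        simp only [Y, smul_sub]; abel
      rw [this, norm_smul, Real.norm_of_nonneg (Real.exp_pos _).le, ← dist_eq_norm]
      have := BoundedContinuousFunction.dist_coe_le_dist (f := u) (g := v) s
      have := Real.exp_pos (α * s)
      calc L * (Real.exp (α * s) * dist (u s) (v s)) ≤ L * (Real.exp (α * s) * dist u v) := by
            gcongr
        _ = _ := by ring
    rw [intervalIntegral.integral_const_mul] at h1
    have h2 := mul_le_mul_of_nonneg_left (integral_exp_weight_le (t := τ) hα0)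
      (show 0 ≤ L * dist u v by positivity)
    have h3 : dist (φ u t) (φ v t) =
        Real.exp (-(α * τ)) * ‖∫ s in (0 : ℝ)..τ, (G s (Y u s) - G s (Y v s))‖ := by
      rw [dist_eq_norm, intervalIntegral.integral_sub (hint _ _ _) (hint _ _ _)]
      simp only [φ]
      rw [← smul_sub, norm_smul, Real.norm_of_nonneg (Real.exp_pos _).le]
    rw [h3]
    calc _ ≤ Real.exp (-(α * τ)) * (L * dist u v * (Real.exp (α * τ) / α)) := by
          gcongr; exact h1.trans h2
      _ = _ := by
          rw [Real.exp_neg, hα]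
          have := Real.exp_pos (2 * L * τ)
          simp
          field_simp
  obtain ⟨u, hu, -⟩ := hcontr.exists_fixedPoint 0 (edist_ne_top _ _)
  refine ⟨Y u, hYc u, fun t ht => ?_⟩
  have h := congrArg (fun w : BoundedContinuousFunction ℝ E => w t) hu
  have h' : φ u t = u t := h
  simp only [φ, max_eq_left ht] at h'
  change y₀ + Real.exp (α * t) • u t = _
  rw [← h', smul_smul, ← Real.exp_add, add_neg_cancel, Real.exp_zero, one_smul]

/-! ### Solutions on bounded intervals: uniqueness, global existence, comparison -/

/-- `y` is a Carathéodory solution on `[0, T]` of `y' = F(y, ω(t))`, `y(0) = y₀`, written in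
integral form. -/
structure IsSol {Y P : Type*} [NormedAddCommGroup Y] [NormedSpace ℝ Y] (F : Y → P → Y)
    (ω : ℝ → P) (y₀ : Y) (T : ℝ) (y : ℝ → Y) : Prop where
  cont : ContinuousOn y (Icc 0 T)
  eq : ∀ t ∈ Icc 0 T, y t = y₀ + ∫ s in (0 : ℝ)..t, F (y s) (ω s)

theorem IsSol.zero {Y P : Type*} [NormedAddCommGroup Y] [NormedSpace ℝ Y] {F : Y → P → Y}
    {ω : ℝ → P} {y₀ : Y} {T : ℝ} {y : ℝ → Y} (h : IsSol F ω y₀ T y) (hT : 0 ≤ T) : y 0 = y₀ := by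
  simpa using h.eq 0 ⟨le_rfl, hT⟩

theorem integrable_rhs {Y P : Type*} [NormedAddCommGroup Y] [ProperSpace Y]
    [NormedAddCommGroup P] [ProperSpace P] {F : Y → P → Y} {ω : ℝ → P} {T r : ℝ} {y : ℝ → Y}
    (hF : LocallyLipschitz fun q : Y × P => F q.1 q.2)
    (hωm : AEStronglyMeasurable ω volume) (hω : ∀ᵐ s, 0 ≤ s → ‖ω s‖ ≤ r) {R : ℝ} (hT : 0 ≤ T)
    (hy : AEStronglyMeasurable y (volume.restrict (Ioc 0 T)))
    (hyR : ∀ᵐ s, s ∈ Ioc 0 T → ‖y s‖ ≤ R) :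
    IntervalIntegrable (fun s => F (y s) (ω s)) volume 0 T := by
  obtain ⟨L, -, M, -, -, hM⟩ := exists_lipschitz_bound F hF R r
  refine intervalIntegrable_of_ae_bound (M := M) ?_ ?_
  · rw [uIoc_of_le hT]
    exact hF.continuous.comp_aestronglyMeasurable (hy.prodMk hωm.restrict)
  · rw [uIoc_of_le hT]
    filter_upwards [hω, hyR] with s h1 h2 hs
    exact hM _ _ (h2 hs) (h1 hs.1.le)

theorem integrable_rhs_of_continuousOn {Y P : Type*} [NormedAddCommGroup Y] [ProperSpace Y]
    [NormedAddCommGroup P] [ProperSpace P] {F : Y → P → Y} {ω : ℝ → P} {T r : ℝ} {y : ℝ → Y}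
    (hF : LocallyLipschitz fun q : Y × P => F q.1 q.2)
    (hωm : AEStronglyMeasurable ω volume) (hω : ∀ᵐ s, 0 ≤ s → ‖ω s‖ ≤ r) (hT : 0 ≤ T)
    (hy : ContinuousOn y (Icc 0 T)) :
    IntervalIntegrable (fun s => F (y s) (ω s)) volume 0 T := by
  obtain ⟨R, hR⟩ := isCompact_Icc.exists_bound_of_continuousOn hy
  refine integrable_rhs hF hωm hω hT ?_ (.of_forall fun s hs => hR s (Ioc_subset_Icc_self hs))
  exact (hy.mono Ioc_subset_Icc_self).aestronglyMeasurable measurableSet_Ioc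

section Cara

variable {Y P : Type*} [NormedAddCommGroup Y] [NormedSpace ℝ Y] [ProperSpace Y]
    [NormedAddCommGroup P] [ProperSpace P] {F : Y → P → Y} {ω : ℝ → P} {y₀ : Y} {T r : ℝ}
    {y y' : ℝ → Y}

/-- Uniqueness of continuous solutions: at a maximum point of `e^{-αs} ‖y(s) - y'(s)‖`, with
`α = 2L`, the integral equation bounds the maximum by half of itself. -/
theorem IsSol.unique (hF : LocallyLipschitz fun q : Y × P => F q.1 q.2)
    (hωm : AEStronglyMeasurable ω volume) (hω : ∀ᵐ s, 0 ≤ s → ‖ω s‖ ≤ r)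
    (h : IsSol F ω y₀ T y) (h' : IsSol F ω y₀ T y') : ∀ t ∈ Icc 0 T, y t = y' t := by
  intro t ht
  have hT : 0 ≤ T := ht.1.trans ht.2
  obtain ⟨R₁, hR₁⟩ := isCompact_Icc.exists_bound_of_continuousOn h.cont
  obtain ⟨R₂, hR₂⟩ := isCompact_Icc.exists_bound_of_continuousOn h'.cont
  obtain ⟨L, hL, -, -, hlip, -⟩ := exists_lipschitz_bound F hF (max R₁ R₂) r
  set α := 2 * L with hα
  have hα0 : 0 < α := by positivity
  have hcont : ContinuousOn (fun s => Real.exp (-(α * s)) * ‖y s - y' s‖) (Icc 0 T) :=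
    (by fun_prop : Continuous fun s => Real.exp (-(α * s))).continuousOn.mul
      (h.cont.sub h'.cont).norm
  obtain ⟨τ, hτ, hmax⟩ := isCompact_Icc.exists_isMaxOn ⟨t, ht⟩ hcont
  set m := Real.exp (-(α * τ)) * ‖y τ - y' τ‖ with hm
  have hm0 : 0 ≤ m := by positivity
  have hle : ∀ s ∈ Icc 0 T, ‖y s - y' s‖ ≤ Real.exp (α * s) * m := fun s hs => by
    have h1 : Real.exp (-(α * s)) * ‖y s - y' s‖ ≤ m := hmax hs
    rw [Real.exp_neg, inv_mul_eq_div, div_le_iff₀ (Real.exp_pos _)] at h1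
    linarith
  have hint : ∀ w, ContinuousOn w (Icc 0 T) →
      IntervalIntegrable (fun s => F (w s) (ω s)) volume 0 τ := fun w hw =>
    integrable_rhs_of_continuousOn hF hωm hω hτ.1 (hw.mono (Icc_subset_Icc_right hτ.2))
  have h1 : ‖∫ s in (0 : ℝ)..τ, (F (y s) (ω s) - F (y' s) (ω s))‖ ≤
      ∫ s in (0 : ℝ)..τ, L * m * Real.exp (α * s) := by
    refine intervalIntegral.norm_integral_le_of_norm_le hτ.1 ?_
      (by apply Continuous.intervalIntegrable; fun_prop)
    filter_upwards [hω] with s hs1 hs2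
    have hs3 : s ∈ Icc 0 T := ⟨hs2.1.le, hs2.2.trans hτ.2⟩
    refine (hlip _ _ _ ((hR₁ s hs3).trans (le_max_left _ _)) ((hR₂ s hs3).trans (le_max_right _ _))
      (hs1 hs3.1)).trans ?_
    have := mul_le_mul_of_nonneg_left (hle s hs3) hL.le
    linarith
  rw [intervalIntegral.integral_const_mul] at h1
  have h2 := mul_le_mul_of_nonneg_left (integral_exp_weight_le (t := τ) hα0)
      (show 0 ≤ L * m by positivity)
  have h3 : y τ - y' τ = ∫ s in (0 : ℝ)..τ, (F (y s) (ω s) - F (y' s) (ω s)) := by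
    rw [intervalIntegral.integral_sub (hint y h.cont) (hint y' h'.cont), h.eq τ hτ, h'.eq τ hτ]
    abel
  have h4 : m ≤ m / 2 := by
    calc m ≤ Real.exp (-(α * τ)) * (L * m * (Real.exp (α * τ) / α)) := by
          conv_lhs => rw [hm, h3]
          gcongr
          exact h1.trans h2
      _ = _ := by
          rw [Real.exp_neg, hα]
          have := Real.exp_pos (2 * L * τ)
          field_simp
  have h5 : m = 0 := by linarith
  have h6 := hle t ht
  rw [h5, mul_zero, norm_le_zero_iff, sub_eq_zero] at h6
  exact h6

/-- An a priori bound on all local solutions yields a solution on the whole half line: the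
right-hand side is cut off outside a larger ball, and the solution of the modified equation never
reaches the region where the two equations differ. -/
theorem exists_isSol_of_apriori (hF : LocallyLipschitz fun q : Y × P => F q.1 q.2)
    (hωm : AEStronglyMeasurable ω volume) (hω : ∀ᵐ s, 0 ≤ s → ‖ω s‖ ≤ r) {C : ℝ}
    (hC : ∀ T y, 0 ≤ T → IsSol F ω y₀ T y → ∀ t ∈ Icc 0 T, ‖y t‖ ≤ C) :
    ∃ y : ℝ → Y, ∀ T, IsSol F ω y₀ T y := by
  classical
  obtain ⟨L, hL, M, hM, hlip, hbd⟩ := exists_lipschitz_bound F hF (C + 2) r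
  let χ : Y → ℝ := fun y => max 0 (min 1 (C + 2 - ‖y‖))
  have hχ0 : ∀ y, 0 ≤ χ y := fun y => le_max_left _ _
  have hχ1 : ∀ y, χ y ≤ 1 := fun y => max_le zero_le_one (min_le_left _ _)
  have hχout : ∀ y, C + 2 < ‖y‖ → χ y = 0 := fun y hy =>
    max_eq_left ((min_le_right _ _).trans (by linarith))
  have hχin : ∀ y, ‖y‖ ≤ C + 1 → χ y = 1 := fun y hy => by
    simp only [χ]
    rw [min_eq_left (by linarith), max_eq_right zero_le_one]
  have hχlip : ∀ y y', |χ y - χ y'| ≤ ‖y - y'‖ := fun y y' => by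
    refine (abs_max_sub_max_le_max _ _ _ _).trans ?_
    simp only [sub_self, abs_zero]
    refine max_le (norm_nonneg _) ((abs_min_sub_min_le_max _ _ _ _).trans ?_)
    simp only [sub_self, abs_zero]
    refine max_le (norm_nonneg _) ?_
    have : C + 2 - ‖y‖ - (C + 2 - ‖y'‖) = -(‖y‖ - ‖y'‖) := by ring
    rw [this, abs_neg]
    exact abs_norm_sub_norm_le y y'
  have hχc : Continuous χ := by fun_prop
  have hcut : ∀ w, ‖w‖ ≤ r → ∀ y y', ‖χ y • F y w - χ y' • F y' w‖ ≤ (L + M) * ‖y - y'‖ := by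
    intro w hw y y'
    by_cases hy : ‖y‖ ≤ C + 2
    · by_cases hy' : ‖y'‖ ≤ C + 2
      · have : χ y • F y w - χ y' • F y' w =
            (χ y - χ y') • F y w + χ y' • (F y w - F y' w) := by
          rw [sub_smul, smul_sub]; abel
        rw [this]
        refine (norm_add_le _ _).trans ?_
        rw [norm_smul, norm_smul, Real.norm_eq_abs, Real.norm_eq_abs, abs_of_nonneg (hχ0 y')]
        have h1 := mul_le_mul (hχlip y y') (hbd y w hy hw) (norm_nonneg _) (norm_nonneg _)
        have h2 := mul_le_mul (hχ1 y') (hlip y y' w hy hy' hw) (norm_nonneg _) zero_le_one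
        linarith
      · rw [hχout y' (not_le.1 hy'), zero_smul, sub_zero, norm_smul, Real.norm_eq_abs]
        have h1 := mul_le_mul (hχlip y y') (hbd y w hy hw) (norm_nonneg _) (norm_nonneg _)
        rw [hχout y' (not_le.1 hy'), sub_zero] at h1
        nlinarith [norm_nonneg (y - y')]
    · by_cases hy' : ‖y'‖ ≤ C + 2
      · rw [hχout y (not_le.1 hy), zero_smul, zero_sub, norm_neg, norm_smul, Real.norm_eq_abs]
        have h1 := mul_le_mul (hχlip y y') (hbd y' w hy' hw) (norm_nonneg _) (norm_nonneg _)
        rw [hχout y (not_le.1 hy), zero_sub, abs_neg] at h1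
        nlinarith [norm_nonneg (y - y')]
      · rw [hχout y (not_le.1 hy), hχout y' (not_le.1 hy'), zero_smul, zero_smul, sub_zero,
          norm_zero]
        positivity
  have hcutb : ∀ w, ‖w‖ ≤ r → ∀ y, ‖χ y • F y w‖ ≤ M := by
    intro w hw y
    by_cases hy : ‖y‖ ≤ C + 2
    · rw [norm_smul, Real.norm_eq_abs, abs_of_nonneg (hχ0 y)]
      nlinarith [hbd y w hy hw, hχ1 y, hχ0 y, norm_nonneg (F y w)]
    · rw [hχout y (not_le.1 hy), zero_smul, norm_zero]
      exact hM.le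
  -- Times at which `ω` exceeds its essential bound form a null set; the field is set to zero there.
  let N : Set ℝ := {s | ‖ω s‖ ≤ r}
  have hN : NullMeasurableSet N volume :=
    nullMeasurableSet_le hωm.norm.aemeasurable aemeasurable_const
  let G : ℝ → Y → Y := fun s y => N.indicator (fun s => χ y • F y (ω s)) s
  obtain ⟨y, hyc, hy⟩ := exists_global_solution G (L + M) M (by positivity)
    (fun s y y' => by
      by_cases hs : s ∈ N
      · simpa [G, hs] using hcut _ hs y y'
      · simp only [G, hs, not_false_eq_true, indicator_of_notMem, sub_self, norm_zero]
        positivity)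
    (fun s y => by
      by_cases hs : s ∈ N
      · simpa [G, hs] using hcutb _ hs y
      · simpa [G, hs] using hM.le)
    (fun y hyc => by
      have h1 : AEStronglyMeasurable (fun s => χ (y s) • F (y s) (ω s)) volume :=
        (hχc.comp hyc).aestronglyMeasurable.smul
          (hF.continuous.comp_aestronglyMeasurable (hyc.aestronglyMeasurable.prodMk hωm))
      exact h1.indicator₀ hN)
    y₀
  have hsol : ∀ T, (∀ s ∈ Ico 0 T, ‖y s‖ ≤ C + 1) → IsSol F ω y₀ T y := fun T hT =>
    ⟨hyc.continuousOn, fun t ht => by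
      rw [hy t ht.1]
      congr 1
      refine intervalIntegral.integral_congr_ae ?_
      filter_upwards [hω, (by simp [ae_iff] : ∀ᵐ s : ℝ, s ≠ T)] with s hs hsT hst
      rw [uIoc_of_le ht.1] at hst
      have : s ∈ N := hs hst.1.le
      simp only [G, indicator_of_mem this]
      rw [hχin _ (hT s ⟨hst.1.le, lt_of_le_of_ne (hst.2.trans ht.2) hsT⟩), one_smul]⟩
  have hbound : ∀ t, 0 ≤ t → ‖y t‖ < C + 1 := by
    intro t ht
    by_contra hcon
    rw [not_lt] at hcon
    have hcl : IsCompact (Icc 0 t ∩ {s | C + 1 ≤ ‖y s‖}) :=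
      isCompact_Icc.inter_right (isClosed_le continuous_const hyc.norm)
    obtain ⟨τ, hτ, hmin⟩ := hcl.exists_isLeast ⟨t, ⟨ht, le_rfl⟩, hcon⟩
    have h1 : ∀ s ∈ Ico 0 τ, ‖y s‖ ≤ C + 1 := fun s hs => by
      by_contra hlt
      exact absurd (hmin ⟨⟨hs.1, hs.2.le.trans hτ.1.2⟩, (not_le.1 hlt).le⟩) (not_le.2 hs.2)
    have h2 := hC τ y hτ.1.1 (hsol τ h1) τ ⟨hτ.1.1, le_rfl⟩
    have h3 : C + 1 ≤ ‖y τ‖ := hτ.2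
    linarith
  exact ⟨y, fun T => hsol T fun s hs => (hbound s hs.1).le⟩

/-- Gronwall's comparison principle: `V ∘ y` is absolutely continuous since `y` is Lipschitz, and
`e^{cs} (V(y(s)) - G / c)` has an almost everywhere nonpositive derivative. -/
theorem IsSol.comparison (hF : LocallyLipschitz fun q : Y × P => F q.1 q.2)
    (hωm : AEStronglyMeasurable ω volume) (hω : ∀ᵐ s, 0 ≤ s → ‖ω s‖ ≤ r)
    (h : IsSol F ω y₀ T y) {V : Y → ℝ} (hV : ContDiff ℝ 1 V) {c G t₀ t : ℝ} (hc : 0 < c)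
    (ht₀ : 0 ≤ t₀) (ht : t₀ ≤ t) (htT : t ≤ T)
    (hG : ∀ᵐ s, s ∈ Ioc t₀ t → fderiv ℝ V (y s) (F (y s) (ω s)) ≤ -c * V (y s) + G) :
    V (y t) ≤ Real.exp (-c * (t - t₀)) * V (y t₀) + G / c * (1 - Real.exp (-c * (t - t₀))) := by
  have hT : 0 ≤ T := ht₀.trans (ht.trans htT)
  have hint := integrable_rhs_of_continuousOn hF hωm hω hT h.cont
  obtain ⟨R, hR⟩ := isCompact_Icc.exists_bound_of_continuousOn h.cont
  obtain ⟨L, -, M, hM, -, hbd⟩ := exists_lipschitz_bound F hF R r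
  have hsub : uIcc t₀ t ⊆ Icc 0 T := by
    rw [uIcc_of_le ht]; exact Icc_subset_Icc ht₀ htT
  have hylip : LipschitzOnWith M.toNNReal y (Icc 0 T) := by
    refine LipschitzOnWith.of_dist_le_mul fun s hs s' hs' => ?_
    have hi : ∀ u ∈ Icc 0 T, IntervalIntegrable (fun s => F (y s) (ω s)) volume 0 u := fun u hu =>
      hint.mono_set (by rw [uIcc_of_le hu.1, uIcc_of_le hT]; exact Icc_subset_Icc_right hu.2)
    rw [Real.coe_toNNReal _ hM.le, dist_eq_norm, Real.dist_eq, h.eq s hs, h.eq s' hs',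
      add_sub_add_left_eq_sub, intervalIntegral.integral_interval_sub_left (hi s hs) (hi s' hs')]
    refine intervalIntegral.norm_integral_le_of_norm_le_const_ae ?_
    filter_upwards [hω] with u hu hus
    have hu' : u ∈ Icc 0 T := by
      rw [uIoc, mem_Ioc] at hus
      exact ⟨(le_min hs'.1 hs.1).trans hus.1.le, hus.2.trans (max_le hs'.2 hs.2)⟩
    exact hbd _ _ (hR u hu') (hu hu'.1)
  obtain ⟨K, hK⟩ := (hV.locallyLipschitz.locallyLipschitzOn
    (s := Metric.closedBall (0 : Y) R)).exists_lipschitzOnWith_of_compact (isCompact_closedBall _ _)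
  have hWac : AbsolutelyContinuousOnInterval (fun s => V (y s)) t₀ t :=
    ((hK.comp hylip fun s hs => by simpa using hR s hs).mono hsub).absolutelyContinuousOnInterval
  have hφac : AbsolutelyContinuousOnInterval
      ((fun s => Real.exp (c * s)) * ((fun s => V (y s)) - fun _ => G / c)) t₀ t := by
    refine AbsolutelyContinuousOnInterval.mul ?_ (hWac.sub ?_)
    · exact ContDiffOn.absolutelyContinuousOnInterval (by fun_prop)
    · exact ContDiffOn.absolutelyContinuousOnInterval contDiffOn_const
  have hle : ∫ s in t₀..t, deriv
      ((fun s => Real.exp (c * s)) * ((fun s => V (y s)) - fun _ => G / c)) s ≤ 0 := by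
    rw [intervalIntegral.integral_of_le ht]
    refine integral_nonpos_of_ae ?_
    rw [Filter.EventuallyLE, ae_restrict_iff' measurableSet_Ioc]
    filter_upwards [hG, hint.ae_hasDerivAt_integral, (by simp [ae_iff] : ∀ᵐ s : ℝ, s ≠ T)]
      with s h1 h2 hsT hs
    have hs0 : 0 < s := ht₀.trans_lt hs.1
    have hsT' : s < T := lt_of_le_of_ne (hs.2.trans htT) hsT
    have hd : HasDerivAt y (F (y s) (ω s)) s := by
      have h3 := (h2 (by rw [uIcc_of_le hT]; exact ⟨hs0.le, hsT'.le⟩) 0 left_mem_uIcc).const_add y₀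
      refine h3.congr_of_eventuallyEq ?_
      filter_upwards [Icc_mem_nhds hs0 hsT'] with u hu using h.eq u hu
    have hW : HasDerivAt (fun s => V (y s)) (fderiv ℝ V (y s) (F (y s) (ω s))) s :=
      ((hV.differentiable one_ne_zero (y s)).hasFDerivAt).comp_hasDerivAt s hd
    have hE : HasDerivAt (fun s => Real.exp (c * s)) (Real.exp (c * s) * (c * 1)) s :=
      ((hasDerivAt_id s).const_mul c).exp
    have hφ := hE.mul (hW.sub (hasDerivAt_const s (G / c)))
    rw [hφ.deriv]
    have h4 := h1 hs
    have h5 := Real.exp_pos (c * s)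
    simp only [Pi.sub_apply, Pi.zero_apply]
    have h6 : Real.exp (c * s) * (c * 1) * (V (y s) - G / c) + Real.exp (c * s) *
        (fderiv ℝ V (y s) (F (y s) (ω s)) - 0) =
        Real.exp (c * s) * (c * V (y s) - G + fderiv ℝ V (y s) (F (y s) (ω s))) := by
      field_simp
      ring
    rw [h6]
    exact mul_nonpos_of_nonneg_of_nonpos h5.le (by linarith)
  rw [hφac.integral_deriv_eq_sub] at hle
  simp only [Pi.mul_apply, Pi.sub_apply] at hle
  have hE : Real.exp (-c * (t - t₀)) = Real.exp (c * t₀) / Real.exp (c * t) := by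
    rw [← Real.exp_sub]; congr 1; ring
  have hp := Real.exp_pos (c * t)
  have : V (y t) - G / c ≤ Real.exp (c * t₀) / Real.exp (c * t) * (V (y t₀) - G / c) := by
    rw [div_mul_eq_mul_div, le_div_iff₀ hp]
    linarith
  rw [hE]
  linarith

end Cara

/-! ### Uniqueness without integrability assumptions -/

/-- A function satisfying an integral equation is measurable and bounded just to the right of any
time `τ`. Either the integrand is integrable up to some time beyond `τ`, and the function is
continuous there; or it is not, and then the integral takes the default value `0` after `τ`, which
makes the function constant. -/
theorem exists_good_right_interval {E : Type*} [NormedAddCommGroup E] [NormedSpace ℝ E]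
    {g w : ℝ → E} {w₀ : E} {τ : ℝ} (hτ : 0 ≤ τ)
    (hw : ∀ t, 0 ≤ t → w t = w₀ + ∫ s in (0 : ℝ)..t, g s) :
    ∃ T > τ, AEStronglyMeasurable w (volume.restrict (Ioc τ T)) ∧
      ∃ R, ∀ t ∈ Ioc τ T, ‖w t‖ ≤ R := by
  by_cases h : ∃ T > τ, IntervalIntegrable g volume 0 T
  · obtain ⟨T, hT, hi⟩ := h
    have hc : ContinuousOn w (Icc 0 T) := by
      have h1 := intervalIntegral.continuousOn_primitive_interval' hi left_mem_uIcc
      rw [uIcc_of_le (hτ.trans hT.le)] at h1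
      exact (continuousOn_const.add h1).congr fun t ht => hw t ht.1
    obtain ⟨R, hR⟩ := isCompact_Icc.exists_bound_of_continuousOn hc
    have hsub : Ioc τ T ⊆ Icc 0 T := fun t ht => ⟨hτ.trans ht.1.le, ht.2⟩
    exact ⟨T, hT, (hc.mono hsub).aestronglyMeasurable measurableSet_Ioc, R,
      fun t ht => hR t (hsub ht)⟩
  · push Not at h
    have hw' : ∀ t ∈ Ioc τ (τ + 1), w t = w₀ := fun t ht => by
      rw [hw t (hτ.trans ht.1.le), intervalIntegral.integral_undef (h t ht.1), add_zero]
    refine ⟨τ + 1, by linarith, ?_, ‖w₀‖, fun t ht => by rw [hw' t ht]⟩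
    refine (aestronglyMeasurable_const (b := w₀)).congr ?_
    rw [Filter.EventuallyEq, ae_restrict_iff' measurableSet_Ioc]
    exact .of_forall fun t ht => (hw' t ht).symm

section Product

variable {E P : Type*} [NormedAddCommGroup E] [NormedSpace ℝ E] [ProperSpace E]
    [NormedAddCommGroup P] [ProperSpace P] {F : E × ℝ → P → E × ℝ} {ω : ℝ → P}
    {x₀ : E} {z₀ r : ℝ} {y : ℝ → E × ℝ} {x' : ℝ → E} {z' : ℝ → ℝ}

/-- Uniqueness without any integrability assumption on the competitor `(x', z')`. If `τ` is the last
time up to which its right-hand side is integrable, then `(x', z')` agrees with `y` before `τ` and is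
measurable and bounded just after `τ`, so that the right-hand side is integrable beyond `τ`. -/
theorem unique_of_integral_eq (hF : LocallyLipschitz fun q : (E × ℝ) × P => F q.1 q.2)
    (hωm : AEStronglyMeasurable ω volume) (hω : ∀ᵐ s, 0 ≤ s → ‖ω s‖ ≤ r)
    (hy : ∀ T, IsSol F ω (x₀, z₀) T y)
    (hx' : ∀ t, 0 ≤ t → x' t = x₀ + ∫ s in (0 : ℝ)..t, (F (x' s, z' s) (ω s)).1)
    (hz' : ∀ t, 0 ≤ t → z' t = z₀ + ∫ s in (0 : ℝ)..t, (F (x' s, z' s) (ω s)).2) :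
    ∀ t, 0 ≤ t → (x' t, z' t) = y t := by
  have hA : ∀ T, 0 ≤ T → IntervalIntegrable (fun s => F (x' s, z' s) (ω s)) volume 0 T →
      ∀ t ∈ Icc 0 T, (x' t, z' t) = y t := by
    intro T hT hi
    have heq : ∀ t ∈ Icc 0 T, (x' t, z' t) =
        (x₀, z₀) + ∫ s in (0 : ℝ)..t, F (x' s, z' s) (ω s) := by
      intro t ht
      have hit : IntervalIntegrable (fun s => F (x' s, z' s) (ω s)) volume 0 t :=
        hi.mono_set (by rw [uIcc_of_le hT, uIcc_of_le ht.1]; exact Icc_subset_Icc_right ht.2)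
      have h1 := (ContinuousLinearMap.fst ℝ E ℝ).intervalIntegral_comp_comm hit
      have h2 := (ContinuousLinearMap.snd ℝ E ℝ).intervalIntegral_comp_comm hit
      simp only [ContinuousLinearMap.coe_fst', ContinuousLinearMap.coe_snd'] at h1 h2
      refine Prod.ext ?_ ?_
      · simp only [Prod.fst_add]; rw [← h1]; exact hx' t ht.1
      · simp only [Prod.snd_add]; rw [← h2]; exact hz' t ht.1
    have hsol : IsSol F ω (x₀, z₀) T (fun t => (x' t, z' t)) := by
      refine ⟨?_, heq⟩
      have h1 := intervalIntegral.continuousOn_primitive_interval' hi left_mem_uIcc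
      rw [uIcc_of_le hT] at h1
      exact (continuousOn_const.add h1).congr heq
    exact hsol.unique hF hωm hω (hy T)
  have hB : ∀ T, 0 ≤ T → IntervalIntegrable (fun s => F (x' s, z' s) (ω s)) volume 0 T := by
    intro T₁ hT₁
    by_contra hcon
    set S : Set ℝ := {T | 0 ≤ T ∧ IntervalIntegrable (fun s => F (x' s, z' s) (ω s)) volume 0 T}
      with hS
    have hdown : ∀ T ∈ S, ∀ t ∈ Icc 0 T, t ∈ S := fun T hT t ht =>
      ⟨ht.1, hT.2.mono_set (by
        rw [uIcc_of_le hT.1, uIcc_of_le ht.1]; exact Icc_subset_Icc_right ht.2)⟩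
    have h0 : (0 : ℝ) ∈ S := ⟨le_rfl, by simp⟩
    have hbd : BddAbove S := ⟨T₁, fun T hT => by
      by_contra hlt
      exact hcon (hdown T hT T₁ ⟨hT₁, (not_le.1 hlt).le⟩).2⟩
    set τ := sSup S
    have hτ : 0 ≤ τ := le_csSup hbd h0
    have hbefore : ∀ t ∈ Ico 0 τ, (x' t, z' t) = y t := fun t ht => by
      obtain ⟨T, hT, hlt⟩ := exists_lt_of_lt_csSup ⟨0, h0⟩ ht.2
      exact hA T hT.1 hT.2 t ⟨ht.1, hlt.le⟩
    obtain ⟨A, hAτ, hAm, RA, hRA⟩ := exists_good_right_interval hτ hx'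
    obtain ⟨B, hBτ, hBm, RB, hRB⟩ := exists_good_right_interval hτ hz'
    have hM : τ < min A B := lt_min hAτ hBτ
    have hM0 : 0 ≤ min A B := hτ.trans hM.le
    obtain ⟨R, hR⟩ := isCompact_Icc.exists_bound_of_continuousOn (hy τ).cont
    have hmem : min A B ∈ S := by
      refine ⟨hM0, integrable_rhs (R := max R (max RA RB)) hF hωm hω hM0 ?_ ?_⟩
      · rw [← Ioc_union_Ioc_eq_Ioc hτ hM.le]
        refine aestronglyMeasurable_union_iff.2 ⟨?_, AEStronglyMeasurable.prodMk ?_ ?_⟩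
        · have h1 : AEStronglyMeasurable y (volume.restrict (Ioc 0 τ)) :=
            ((hy τ).cont.mono Ioc_subset_Icc_self).aestronglyMeasurable measurableSet_Ioc
          refine h1.congr ?_
          rw [Filter.EventuallyEq, ae_restrict_iff' measurableSet_Ioc]
          filter_upwards [(by simp [ae_iff] : ∀ᵐ s : ℝ, s ≠ τ)] with s hs hs'
          exact (hbefore s ⟨hs'.1.le, lt_of_le_of_ne hs'.2 hs⟩).symm
        · exact hAm.mono_set (Ioc_subset_Ioc_right (min_le_left _ _))
        · exact hBm.mono_set (Ioc_subset_Ioc_right (min_le_right _ _))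
      · filter_upwards [(by simp [ae_iff] : ∀ᵐ s : ℝ, s ≠ τ)] with s hs hs'
        rcases lt_or_gt_of_ne hs with h | h
        · rw [hbefore s ⟨hs'.1.le, h⟩]
          exact (hR s ⟨hs'.1.le, h.le⟩).trans (le_max_left _ _)
        · refine le_max_of_le_right ?_
          rw [Prod.norm_def]
          exact max_le_max (hRA s ⟨h, hs'.2.trans (min_le_left _ _)⟩)
            (hRB s ⟨h, hs'.2.trans (min_le_right _ _)⟩)
    exact absurd (le_csSup hbd hmem) (not_le.2 hM)
  exact fun t ht => hA t ht (hB t ht) t ⟨ht, le_rfl⟩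

end Product

/-! ### The gain and the standing assumptions -/

/-- The disturbance term of the dissipation inequality, for `|d| = δ` and `|θ| = ϑ`. -/
def gain (κ lam : ℝ → ℝ) (a b δ ϑ z : ℝ) : ℝ :=
  a * (δ ^ 2 + (max (ϑ - b - lam (Real.exp z)) 0) ^ 2) / (1 + κ (Real.exp z))

theorem ClassKInf.nonneg {κ : ℝ → ℝ} (hκ : ClassKInf κ) {s : ℝ} (hs : 0 ≤ s) : 0 ≤ κ s := by
  have := hκ.2.1.monotoneOn (a := 0) (b := s) (by simp) hs hs
  rwa [hκ.2.2.1] at this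

theorem ClassKInf.monotone_exp {κ : ℝ → ℝ} (hκ : ClassKInf κ) :
    Monotone fun z => κ (Real.exp z) := fun _ _ h =>
  hκ.2.1.monotoneOn (Real.exp_pos _).le (Real.exp_pos _).le (Real.exp_le_exp.2 h)

theorem ClassKInf.continuous_exp {κ : ℝ → ℝ} (hκ : ClassKInf κ) :
    Continuous fun z => κ (Real.exp z) :=
  hκ.1.comp_continuous Real.continuous_exp fun z => (Real.exp_pos z).le

section Gain

variable {κ lam : ℝ → ℝ} {a b : ℝ}

theorem gain_nonneg (hκ : ClassKInf κ) (ha : 0 < a) (δ ϑ z : ℝ) : 0 ≤ gain κ lam a b δ ϑ z := by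
  have := hκ.nonneg (Real.exp_pos z).le
  unfold gain
  positivity

theorem gain_mono (hκ : ClassKInf κ) (hlam : ClassKInf lam) (ha : 0 < a) {δ δ' ϑ ϑ' z z' : ℝ}
    (hδ0 : 0 ≤ δ) (hδ : δ ≤ δ') (hϑ : ϑ ≤ ϑ') (hz : z' ≤ z) :
    gain κ lam a b δ ϑ z ≤ gain κ lam a b δ' ϑ' z' := by
  have h0 := hκ.nonneg (Real.exp_pos z').le
  have h1 := hκ.monotone_exp hz
  have h2 := hlam.monotone_exp hz
  simp only at h1 h2
  unfold gain
  gcongr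

theorem gain_continuous (hκ : ClassKInf κ) (hlam : ClassKInf lam) {δ ϑ z : ℝ → ℝ}
    (hδ : Continuous δ) (hϑ : Continuous ϑ) (hz : Continuous z) :
    Continuous fun η => gain κ lam a b (δ η) (ϑ η) (z η) := by
  have h1 := hκ.continuous_exp.comp hz
  have h2 := hlam.continuous_exp.comp hz
  simp only [Function.comp_def] at h1 h2
  unfold gain
  refine Continuous.div (continuous_const.mul ((hδ.pow 2).add
    ((((hϑ.sub continuous_const).sub h2).max continuous_const).pow 2)))
    (continuous_const.add h1) fun η => ?_
  have := hκ.nonneg (Real.exp_pos (z η)).le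
  positivity

theorem exists_gain_le (hκ : ClassKInf κ) (hlam : ClassKInf lam) (ha : 0 < a) (hb : 0 < b)
    (δ ϑ : ℝ) {η : ℝ} (hη : 0 < η) : ∃ Z, gain κ lam a b δ ϑ Z ≤ η := by
  have ht : Tendsto (fun z => κ (Real.exp z)) atTop atTop :=
    hκ.2.2.2.comp Real.tendsto_exp_atTop
  obtain ⟨Z, hZ⟩ := (ht.eventually_ge_atTop (a * (δ ^ 2 + |ϑ| ^ 2) / η)).exists
  refine ⟨Z, ?_⟩
  have h0 := hκ.nonneg (Real.exp_pos Z).le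
  have h1 := hlam.nonneg (Real.exp_pos Z).le
  have h2 : max (ϑ - b - lam (Real.exp Z)) 0 ≤ |ϑ| :=
    max_le (by linarith [le_abs_self ϑ]) (abs_nonneg _)
  unfold gain
  rw [div_le_iff₀ (by positivity)]
  rw [div_le_iff₀ hη] at hZ
  have h3 : a * (δ ^ 2 + (max (ϑ - b - lam (Real.exp Z)) 0) ^ 2) ≤ a * (δ ^ 2 + |ϑ| ^ 2) := by
    gcongr
  nlinarith

end Gain

/-- The vector field of the system, as a function of the state `(x, z)` and of the pair `(θ, d)`. -/
def field {E P₁ P₂ : Type*} (f : E → ℝ → P₁ → P₂ → E) (V : E × ℝ → ℝ) (Γ ε : ℝ)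
    (y : E × ℝ) (w : P₁ × P₂) : E × ℝ :=
  (f y.1 y.2 w.1 w.2, Γ * Real.exp (-y.2) * max (V y - ε) 0)

/-- The standing assumptions on the data of the system, with the dissipation inequality written in
terms of `field` and `gain`. -/
structure Deadzone {E P₁ P₂ : Type*} [NormedAddCommGroup E] [NormedSpace ℝ E]
    [NormedAddCommGroup P₁] [NormedAddCommGroup P₂] (Θ : Set P₁) (D : Set P₂)
    (f : E → ℝ → P₁ → P₂ → E) (V : E × ℝ → ℝ) (Γ ε : ℝ) (κ lam : ℝ → ℝ) (a b c : ℝ) : Prop where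
  Γ_pos : 0 < Γ
  ε_pos : 0 < ε
  lip : LocallyLipschitz fun q : (E × ℝ) × (P₁ × P₂) => f q.1.1 q.1.2 q.2.1 q.2.2
  contDiff : ContDiff ℝ 1 V
  V_nonneg : ∀ q, 0 ≤ V q
  bdd : ∀ M : ℝ, 0 < M → Bornology.IsBounded {q : E × ℝ | q.2 ∈ Icc (-M) M ∧ V q ≤ M}
  hκ : ClassKInf κ
  hlam : ClassKInf lam
  a_pos : 0 < a
  b_pos : 0 < b
  c_pos : 0 < c
  diss : ∀ (y : E × ℝ) (w : P₁ × P₂), w.1 ∈ Θ → w.2 ∈ D →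
    fderiv ℝ V y (field f V Γ ε y w) ≤ -c * V y + gain κ lam a b ‖w.2‖ ‖w.1‖ y.2

/-! ### Estimates along solutions and the a priori bound -/

namespace Deadzone

variable {E P₁ P₂ : Type*} [NormedAddCommGroup E] [NormedSpace ℝ E]
    [NormedAddCommGroup P₁] [NormedAddCommGroup P₂] {Θ : Set P₁} {D : Set P₂}
    {f : E → ℝ → P₁ → P₂ → E} {V : E × ℝ → ℝ} {Γ ε : ℝ} {κ lam : ℝ → ℝ} {a b c : ℝ}
    {ω : ℝ → P₁ × P₂} {y₀ : E × ℝ} {T δ ϑ : ℝ} {y : ℝ → E × ℝ}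

theorem field_lip (H : Deadzone Θ D f V Γ ε κ lam a b c) :
    LocallyLipschitz fun q : (E × ℝ) × (P₁ × P₂) => field f V Γ ε q.1 q.2 := by
  refine H.lip.prodMk ?_
  have h1 : LocallyLipschitz fun p : ℝ × ℝ => Γ * Real.exp (-p.1) * p.2 :=
    ContDiff.locallyLipschitz (𝕂 := ℝ) (by fun_prop)
  have hV1 := H.contDiff
  have hV : LocallyLipschitz fun y : E × ℝ => V y - ε :=
    ContDiff.locallyLipschitz (𝕂 := ℝ) (by fun_prop)
  have h2 : LocallyLipschitz fun y : E × ℝ => (y.2, max (V y - ε) 0) :=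
    LipschitzWith.prod_snd.locallyLipschitz.prodMk (hV.max_const 0)
  exact (h1.comp h2).comp LipschitzWith.prod_fst.locallyLipschitz

/-- An admissible disturbance: measurable, with values in `Θ × D`, and essentially bounded on the
half line by `ϑ` and `δ`. -/
structure Adm (Θ : Set P₁) (D : Set P₂) (ω : ℝ → P₁ × P₂) (δ ϑ : ℝ) : Prop where
  meas : AEStronglyMeasurable ω volume
  mem₁ : ∀ t, (ω t).1 ∈ Θ
  mem₂ : ∀ t, (ω t).2 ∈ D
  bd₁ : ∀ᵐ t, 0 ≤ t → ‖(ω t).1‖ ≤ ϑ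
  bd₂ : ∀ᵐ t, 0 ≤ t → ‖(ω t).2‖ ≤ δ

theorem Adm.bd (hω : Adm Θ D ω δ ϑ) : ∀ᵐ t, 0 ≤ t → ‖ω t‖ ≤ max ϑ δ := by
  filter_upwards [hω.bd₁, hω.bd₂] with t h1 h2 ht
  rw [Prod.norm_def]
  exact max_le_max (h1 ht) (h2 ht)

theorem z_rate_continuousOn (H : Deadzone Θ D f V Γ ε κ lam a b c)
    (h : ContinuousOn y (Icc 0 T)) :
    ContinuousOn (fun s => Γ * Real.exp (-(y s).2) * max (V (y s) - ε) 0) (Icc 0 T) := by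
  have hV := H.contDiff.continuous
  exact (by fun_prop : Continuous fun q : E × ℝ =>
    Γ * Real.exp (-q.2) * max (V q - ε) 0).comp_continuousOn h

variable [ProperSpace E] [ProperSpace P₁] [ProperSpace P₂]

theorem sol_fst (H : Deadzone Θ D f V Γ ε κ lam a b c) (hω : Adm Θ D ω δ ϑ)
    (h : IsSol (field f V Γ ε) ω y₀ T y) {t : ℝ} (ht : t ∈ Icc 0 T) :
    IntervalIntegrable (fun s => f (y s).1 (y s).2 (ω s).1 (ω s).2) volume 0 t ∧
    (y t).1 = y₀.1 + ∫ s in (0 : ℝ)..t, f (y s).1 (y s).2 (ω s).1 (ω s).2 := by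
  have hi := integrable_rhs_of_continuousOn H.field_lip hω.meas hω.bd ht.1
    (h.cont.mono (Icc_subset_Icc_right ht.2))
  have h1 := (ContinuousLinearMap.fst ℝ E ℝ).intervalIntegral_comp_comm hi
  constructor
  · exact ⟨(ContinuousLinearMap.fst ℝ E ℝ).integrable_comp hi.1,
      (ContinuousLinearMap.fst ℝ E ℝ).integrable_comp hi.2⟩
  · have h2 := congrArg Prod.fst (h.eq t ht)
    rw [Prod.fst_add] at h2
    rw [h2]
    congr 1
    exact h1.symm

theorem sol_snd (H : Deadzone Θ D f V Γ ε κ lam a b c) (hω : Adm Θ D ω δ ϑ)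
    (h : IsSol (field f V Γ ε) ω y₀ T y) {t : ℝ} (ht : t ∈ Icc 0 T) :
    (y t).2 = y₀.2 + ∫ s in (0 : ℝ)..t, Γ * Real.exp (-(y s).2) * max (V (y s) - ε) 0 := by
  have hi := integrable_rhs_of_continuousOn H.field_lip hω.meas hω.bd ht.1
    (h.cont.mono (Icc_subset_Icc_right ht.2))
  have h1 := (ContinuousLinearMap.snd ℝ E ℝ).intervalIntegral_comp_comm hi
  have h2 := congrArg Prod.snd (h.eq t ht)
  rw [Prod.snd_add] at h2
  rw [h2]
  congr 1
  exact h1.symm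

theorem z_sub (H : Deadzone Θ D f V Γ ε κ lam a b c) (hω : Adm Θ D ω δ ϑ)
    (h : IsSol (field f V Γ ε) ω y₀ T y) {s t : ℝ} (hs : s ∈ Icc 0 T) (ht : t ∈ Icc 0 T) :
    (y t).2 - (y s).2 = ∫ u in s..t, Γ * Real.exp (-(y u).2) * max (V (y u) - ε) 0 := by
  have hi : ∀ t ∈ Icc 0 T, IntervalIntegrable
      (fun s => Γ * Real.exp (-(y s).2) * max (V (y s) - ε) 0) volume 0 t := fun t ht =>
    ((H.z_rate_continuousOn h.cont).mono (by
      rw [uIcc_of_le ht.1]; exact Icc_subset_Icc_right ht.2)).intervalIntegrable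
  rw [H.sol_snd hω h hs, H.sol_snd hω h ht, add_sub_add_left_eq_sub,
    intervalIntegral.integral_interval_sub_left (hi t ht) (hi s hs)]

theorem z_mono (H : Deadzone Θ D f V Γ ε κ lam a b c) (hω : Adm Θ D ω δ ϑ)
    (h : IsSol (field f V Γ ε) ω y₀ T y) {s t : ℝ} (hs : 0 ≤ s) (hst : s ≤ t) (ht : t ≤ T) :
    (y s).2 ≤ (y t).2 := by
  rw [← sub_nonneg, H.z_sub hω h ⟨hs, hst.trans ht⟩ ⟨hs.trans hst, ht⟩]
  refine intervalIntegral.integral_nonneg hst fun u _ => ?_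
  have := H.Γ_pos
  positivity

/-- The comparison principle along a solution, from a time `s` on after which the disturbances
are bounded by `δ'` and `ϑ'`, and at which `z` is at least `z₁`. -/
theorem V_le (H : Deadzone Θ D f V Γ ε κ lam a b c) (hω : Adm Θ D ω δ ϑ)
    (h : IsSol (field f V Γ ε) ω y₀ T y) {s t δ' ϑ' z₁ : ℝ} (hs : 0 ≤ s) (hst : s ≤ t)
    (ht : t ≤ T) (hz : z₁ ≤ (y s).2) (hδ : ∀ᵐ u, s ≤ u → ‖(ω u).2‖ ≤ δ')
    (hϑ : ∀ᵐ u, s ≤ u → ‖(ω u).1‖ ≤ ϑ') :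
    V (y t) ≤ Real.exp (-c * (t - s)) * V (y s) +
      gain κ lam a b δ' ϑ' z₁ / c * (1 - Real.exp (-c * (t - s))) := by
  refine h.comparison H.field_lip hω.meas hω.bd H.contDiff H.c_pos hs hst ht ?_
  filter_upwards [hδ, hϑ] with u h1 h2 hu
  have h3 := H.diss (y u) (ω u) (hω.mem₁ u) (hω.mem₂ u)
  have h4 : gain κ lam a b ‖(ω u).2‖ ‖(ω u).1‖ (y u).2 ≤ gain κ lam a b δ' ϑ' z₁ :=
    gain_mono H.hκ H.hlam H.a_pos (norm_nonneg _) (h1 hu.1.le) (h2 hu.1.le)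
      (hz.trans (H.z_mono hω h hs hu.1.le (hu.2.trans ht)))
  linarith

/-- Solutions are bounded, locally uniformly in the initial state and in the size of the
disturbances, and uniformly in the length of the time interval. -/
theorem apriori (H : Deadzone Θ D f V Γ ε κ lam a b c) (R : ℝ) :
    ∃ C, ∀ y₀ : E × ℝ, ‖y₀‖ ≤ R → ∀ δ ϑ, δ ≤ R → ϑ ≤ R → ∀ ω : ℝ → P₁ × P₂, Adm Θ D ω δ ϑ →
      ∀ T y, IsSol (field f V Γ ε) ω y₀ T y → ∀ t ∈ Icc 0 T, ‖y t‖ ≤ C := by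
  have hΓ := H.Γ_pos
  have hc := H.c_pos
  have hε := H.ε_pos
  obtain ⟨K₀, hK₀⟩ := (isCompact_closedBall (0 : E × ℝ) R).exists_bound_of_continuousOn
    H.contDiff.continuous.continuousOn
  obtain ⟨Z, hZ⟩ := exists_gain_le H.hκ H.hlam H.a_pos H.b_pos R R (mul_pos hc hε)
  set g := gain κ lam a b R R (-R)
  have hg : 0 ≤ g := gain_nonneg H.hκ H.a_pos _ _ _
  set K := |K₀| + g / c
  have hK : 0 ≤ K := by positivity
  set Zb := max Z R + Γ * Real.exp R * K / c
  obtain ⟨C, hC⟩ := (H.bdd (max (max |Zb| |R|) K + 1) (by positivity)).exists_norm_le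
  refine ⟨C, fun y₀ hy₀ δ ϑ hδ hϑ ω hω T y h t ht => ?_⟩
  have hT : 0 ≤ T := ht.1.trans ht.2
  have hy0 := h.zero hT
  have hz₀ : |y₀.2| ≤ R := (norm_snd_le y₀).trans hy₀
  have hδ' : ∀ᵐ u, 0 ≤ u → ‖(ω u).2‖ ≤ R := by
    filter_upwards [hω.bd₂] with u hu h0 using (hu h0).trans hδ
  have hϑ' : ∀ᵐ u, 0 ≤ u → ‖(ω u).1‖ ≤ R := by
    filter_upwards [hω.bd₁] with u hu h0 using (hu h0).trans hϑ
  have hzlow : ∀ s ∈ Icc 0 T, -R ≤ (y s).2 := fun s hs => by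
    have := H.z_mono hω h le_rfl hs.1 hs.2
    rw [hy0] at this
    linarith [neg_abs_le y₀.2]
  have hVK : ∀ s ∈ Icc 0 T, V (y s) ≤ K := by
    intro s hs
    have h1 := H.V_le hω h le_rfl hs.1 hs.2 (hzlow 0 ⟨le_rfl, hT⟩) hδ' hϑ'
    have h2 : V (y 0) ≤ |K₀| := by
      rw [hy0]
      exact (le_abs_self _).trans ((hK₀ y₀ (by simpa using hy₀)).trans (le_abs_self _))
    have h3 : Real.exp (-c * (s - 0)) ≤ 1 := Real.exp_le_one_iff.2 (by nlinarith [hs.1])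
    have h4 := Real.exp_pos (-c * (s - 0))
    have h5 := H.V_nonneg (y 0)
    have h6 : 0 ≤ g / c := by positivity
    have h7 : Real.exp (-c * (s - 0)) * V (y 0) ≤ 1 * V (y 0) := by gcongr
    have h8 : g / c * (1 - Real.exp (-c * (s - 0))) ≤ g / c * 1 := by gcongr; linarith
    change V (y s) ≤ |K₀| + g / c
    linarith
  have hzup : (y t).2 ≤ Zb := by
    have hZb : max Z R ≤ Zb := le_add_of_nonneg_right (by positivity)
    rcases le_or_gt (y t).2 (max Z R) with hle | hgt
    · exact hle.trans hZb
    have hcz : ContinuousOn (fun s => (y s).2) (Icc 0 t) :=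
      continuous_snd.comp_continuousOn (h.cont.mono (Icc_subset_Icc_right ht.2))
    have h0 : (y 0).2 ≤ max Z R := by
      rw [hy0]; exact ((le_abs_self _).trans hz₀).trans (le_max_right _ _)
    -- After a time `τ` at which `z` equals `max Z R`, the gain is at most `c * ε`, so that
    -- `V - ε` decays exponentially and `z` can only increase by a bounded amount.
    obtain ⟨τ, hτ, hτz⟩ := intermediate_value_Icc ht.1 hcz ⟨h0, hgt.le⟩
    simp only at hτz
    have hτT : τ ∈ Icc 0 T := ⟨hτ.1, hτ.2.trans ht.2⟩
    have hdec : ∀ s ∈ Icc τ t, Γ * Real.exp (-(y s).2) * max (V (y s) - ε) 0 ≤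
        Γ * Real.exp R * K * Real.exp (-c * (s - τ)) := by
      intro s hs
      have hsT : s ∈ Icc 0 T := ⟨hτ.1.trans hs.1, hs.2.trans ht.2⟩
      have h1 := H.V_le hω h hτ.1 hs.1 hsT.2 (z₁ := Z) (hτz ▸ le_max_left _ _)
        (hδ'.mono fun u hu h => hu (hτ.1.trans h)) (hϑ'.mono fun u hu h => hu (hτ.1.trans h))
      have h2 : gain κ lam a b R R Z / c ≤ ε := by
        rw [div_le_iff₀ hc]; linarith
      have h3 : Real.exp (-c * (s - τ)) ≤ 1 := Real.exp_le_one_iff.2 (by nlinarith [hs.1])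
      have h4 := Real.exp_pos (-c * (s - τ))
      have h5 : Real.exp (-c * (s - τ)) * V (y τ) ≤ Real.exp (-c * (s - τ)) * K := by
        gcongr; exact hVK τ hτT
      have h6 : gain κ lam a b R R Z / c * (1 - Real.exp (-c * (s - τ))) ≤ ε * 1 := by
        have : 0 ≤ 1 - Real.exp (-c * (s - τ)) := by linarith
        calc _ ≤ ε * (1 - Real.exp (-c * (s - τ))) := by gcongr
          _ ≤ ε * 1 := by gcongr; linarith
      have h7 : max (V (y s) - ε) 0 ≤ K * Real.exp (-c * (s - τ)) :=
        max_le (by linarith) (by positivity)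
      have h8 : Real.exp (-(y s).2) ≤ Real.exp R :=
        Real.exp_le_exp.2 (by linarith [hzlow s hsT])
      calc _ ≤ Γ * Real.exp R * (K * Real.exp (-c * (s - τ))) := by gcongr
        _ = _ := by ring
    have h1 := H.z_sub hω h hτT ht
    have hi : IntervalIntegrable (fun s => Γ * Real.exp (-(y s).2) * max (V (y s) - ε) 0)
        volume τ t := ((H.z_rate_continuousOn h.cont).mono (by
          rw [uIcc_of_le hτ.2]; exact Icc_subset_Icc hτ.1 ht.2)).intervalIntegrable
    have h2 : (y t).2 - (y τ).2 ≤
        ∫ s in τ..t, Γ * Real.exp R * K * Real.exp (-c * (s - τ)) := by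
      rw [h1]
      exact intervalIntegral.integral_mono_on hτ.2 hi
        (by apply Continuous.intervalIntegrable; fun_prop) hdec
    have h3 : ∫ s in τ..t, Real.exp (-c * (s - τ)) = (1 - Real.exp (-c * (t - τ))) / c := by
      rw [intervalIntegral.integral_comp_sub_right (fun s => Real.exp (-c * s)),
        intervalIntegral.integral_comp_mul_left _ (neg_ne_zero.2 hc.ne'), integral_exp]
      simp
      field_simp
      ring
    rw [intervalIntegral.integral_const_mul, h3, hτz] at h2
    have h4 : Γ * Real.exp R * K * ((1 - Real.exp (-c * (t - τ))) / c) ≤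
        Γ * Real.exp R * K * (1 / c) := by
      gcongr
      linarith [Real.exp_pos (-c * (t - τ))]
    change (y t).2 ≤ max Z R + Γ * Real.exp R * K / c
    have h5 : Γ * Real.exp R * K * (1 / c) = Γ * Real.exp R * K / c := by ring
    linarith
  refine hC (y t) ⟨⟨?_, ?_⟩, ?_⟩
  · have h1 := hzlow t ht
    have h2 := le_max_left (max |Zb| |R|) K
    have h3 := le_max_right |Zb| |R|
    linarith [le_abs_self R]
  · have h2 := le_max_left (max |Zb| |R|) K
    have h3 := le_max_left |Zb| |R|
    linarith [le_abs_self Zb]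
  · have h2 := le_max_right (max |Zb| |R|) K
    linarith [hVK t ht]

end Deadzone

/-! ### Continuous bound and asymptotic behaviour -/

namespace Deadzone

variable {E P₁ P₂ : Type*} [NormedAddCommGroup E] [NormedSpace ℝ E] [ProperSpace E]
    [NormedAddCommGroup P₁] [ProperSpace P₁] [NormedAddCommGroup P₂] [ProperSpace P₂]
    {Θ : Set P₁} {D : Set P₂}
    {f : E → ℝ → P₁ → P₂ → E} {V : E × ℝ → ℝ} {Γ ε : ℝ} {κ lam : ℝ → ℝ} {a b c : ℝ}
    {ω : ℝ → P₁ × P₂} {y₀ : E × ℝ} {δ ϑ : ℝ} {y : ℝ → E × ℝ}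

/-- The bound on the trajectories can be chosen to depend continuously on the data: the admissible
bounds form a convex set, and a bound that is locally constant in the data exists, so a partition of
unity applies. -/
theorem exists_continuous_bound (H : Deadzone Θ D f V Γ ε κ lam a b c) :
    ∃ B : (E × ℝ) × ℝ × ℝ → ℝ, Continuous B ∧
      ∀ (y₀ : E × ℝ) (δ ϑ : ℝ) (ω : ℝ → P₁ × P₂), Adm Θ D ω δ ϑ →
        ∀ T y, IsSol (field f V Γ ε) ω y₀ T y → ∀ t ∈ Icc 0 T, ‖y t‖ ≤ B (y₀, δ, ϑ) := by
  let S : (E × ℝ) × ℝ × ℝ → Set ℝ := fun q => {r | ∀ ω : ℝ → P₁ × P₂, Adm Θ D ω q.2.1 q.2.2 →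
    ∀ T y, IsSol (field f V Γ ε) ω q.1 T y → ∀ t ∈ Icc 0 T, ‖y t‖ ≤ r}
  obtain ⟨B, hB⟩ := exists_continuous_forall_mem_convex_of_local_const (t := S)
    (fun q => by
      have : IsUpperSet (S q) := fun r r' hr h ω hω T y hy t ht => (h ω hω T y hy t ht).trans hr
      exact this.ordConnected.convex)
    (fun q => by
      obtain ⟨C, hC⟩ := H.apriori (‖q‖ + 1)
      refine ⟨C, ?_⟩
      filter_upwards [continuous_norm.continuousAt.eventually (gt_mem_nhds (lt_add_one ‖q‖))]
        with q' hq' ω hω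
      have h1 : ‖q'.2‖ ≤ ‖q‖ + 1 := (norm_snd_le q').trans hq'.le
      exact hC q'.1 ((norm_fst_le q').trans hq'.le) _ _
        ((le_abs_self _).trans ((norm_fst_le q'.2).trans h1))
        ((le_abs_self _).trans ((norm_snd_le q'.2).trans h1)) ω hω)
  exact ⟨B, B.continuous, fun y₀ δ ϑ ω hω => hB (y₀, δ, ϑ) ω hω⟩

theorem exists_z_lim (H : Deadzone Θ D f V Γ ε κ lam a b c) (hω : Adm Θ D ω δ ϑ)
    (h : ∀ T, IsSol (field f V Γ ε) ω y₀ T y) {B : ℝ} (hB : ∀ t, 0 ≤ t → ‖y t‖ ≤ B) :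
    ∃ zl, Tendsto (fun t => (y t).2) atTop (𝓝 zl) ∧ (∀ t, 0 ≤ t → (y t).2 ≤ zl) ∧ zl ≤ B := by
  have hmono : Monotone fun t => (y (max t 0)).2 := fun s t hst =>
    H.z_mono hω (h (max t 0)) (le_max_right _ _) (max_le_max_right 0 hst) le_rfl
  have hle : ∀ t, (y (max t 0)).2 ≤ B := fun t =>
    (le_abs_self _).trans ((norm_snd_le _).trans (hB _ (le_max_right _ _)))
  have hbdd : BddAbove (range fun t => (y (max t 0)).2) := ⟨B, by rintro _ ⟨t, rfl⟩; exact hle t⟩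
  refine ⟨⨆ t, (y (max t 0)).2, ?_, fun t ht => ?_, ciSup_le hle⟩
  · refine (tendsto_atTop_ciSup hmono hbdd).congr' ?_
    filter_upwards [eventually_ge_atTop 0] with t ht
    rw [max_eq_left ht]
  · have := le_ciSup hbdd t
    simpa [max_eq_left ht] using this

/-- A one-sided Barbalat argument: `V` increases at a bounded rate, so an excursion of `V` above
`ε + η` costs a fixed increment of `z`, and `z` converges. -/
theorem eventually_V_le (H : Deadzone Θ D f V Γ ε κ lam a b c) (hω : Adm Θ D ω δ ϑ)
    (h : ∀ T, IsSol (field f V Γ ε) ω y₀ T y) {zl : ℝ}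
    (hlim : Tendsto (fun t => (y t).2) atTop (𝓝 zl)) (hzl : ∀ t, 0 ≤ t → (y t).2 ≤ zl)
    {η : ℝ} (hη : 0 < η) : ∀ᶠ t in atTop, V (y t) ≤ ε + η := by
  have hΓ := H.Γ_pos
  have hc := H.c_pos
  set G := gain κ lam a b δ ϑ y₀.2 + 1
  have hG : 0 < G := by have := gain_nonneg (lam := lam) (b := b) H.hκ H.a_pos δ ϑ y₀.2; positivity
  have hgrow : ∀ s t, 0 ≤ s → s ≤ t → V (y t) ≤ V (y s) + G * (t - s) := by
    intro s t hs hst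
    have hz : y₀.2 ≤ (y s).2 := by
      have := H.z_mono hω (h s) le_rfl hs le_rfl
      rwa [(h s).zero hs] at this
    have h1 := H.V_le hω (h t) hs hst le_rfl hz (hω.bd₂.mono fun u hu h => hu (hs.trans h))
      (hω.bd₁.mono fun u hu h => hu (hs.trans h))
    have h2 : Real.exp (-c * (t - s)) ≤ 1 := Real.exp_le_one_iff.2 (by nlinarith)
    have h3 : 1 - Real.exp (-c * (t - s)) ≤ c * (t - s) := by
      have := Real.add_one_le_exp (-c * (t - s))
      linarith
    have hgn := gain_nonneg (lam := lam) (b := b) H.hκ H.a_pos δ ϑ y₀.2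
    have h4 : gain κ lam a b δ ϑ y₀.2 / c * (1 - Real.exp (-c * (t - s))) ≤
        gain κ lam a b δ ϑ y₀.2 / c * (c * (t - s)) := by gcongr
    have h5 : gain κ lam a b δ ϑ y₀.2 / c * (c * (t - s)) =
        gain κ lam a b δ ϑ y₀.2 * (t - s) := by field_simp
    have h6 : Real.exp (-c * (t - s)) * V (y s) ≤ 1 * V (y s) := by
      gcongr
      exact H.V_nonneg _
    have h7 : G * (t - s) = gain κ lam a b δ ϑ y₀.2 * (t - s) + (t - s) := by ring
    linarith
  set τ := η / (2 * G) with hτ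
  have hτ0 : 0 < τ := by positivity
  set μ := Γ * Real.exp (-zl) * (η / 2) * τ
  have hμ : 0 < μ := by positivity
  have hev : ∀ᶠ t in atTop, zl - μ < (y (t - τ)).2 :=
    (hlim.comp (tendsto_atTop_add_const_right atTop (-τ) tendsto_id)).eventually
      (lt_mem_nhds (by linarith))
  filter_upwards [hev, eventually_ge_atTop τ] with t ht1 ht2
  by_contra hcon
  rw [not_le] at hcon
  have hs0 : 0 ≤ t - τ := by linarith
  have ht0 : 0 ≤ t := by linarith
  have h1 := H.z_sub hω (h t) (s := t - τ) (t := t) ⟨hs0, by linarith⟩ ⟨ht0, le_rfl⟩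
  have hi : IntervalIntegrable (fun s => Γ * Real.exp (-(y s).2) * max (V (y s) - ε) 0)
      volume (t - τ) t := ((H.z_rate_continuousOn (h t).cont).mono (by
        rw [uIcc_of_le (by linarith)]; exact Icc_subset_Icc_left hs0)).intervalIntegrable
  have h2 : ∫ _ in (t - τ)..t, Γ * Real.exp (-zl) * (η / 2) ≤ (y t).2 - (y (t - τ)).2 := by
    rw [h1]
    refine intervalIntegral.integral_mono_on (by linarith) (by simp) hi fun s hs => ?_
    have h3 := hgrow s t (hs0.trans hs.1) hs.2
    have h4 : G * (t - s) ≤ G * τ := by gcongr; linarith [hs.1]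
    have h5 : G * τ = η / 2 := by rw [hτ]; field_simp
    have h6 : η / 2 ≤ max (V (y s) - ε) 0 := le_max_of_le_left (by linarith)
    have h7 : Real.exp (-zl) ≤ Real.exp (-(y s).2) :=
      Real.exp_le_exp.2 (by linarith [hzl s (hs0.trans hs.1)])
    gcongr
  rw [intervalIntegral.integral_const, smul_eq_mul] at h2
  have h3 : (t - (t - τ)) * (Γ * Real.exp (-zl) * (η / 2)) = μ := by simp only [μ]; ring
  linarith [hzl t ht0]

/-- If from some time on the disturbances are bounded by `δ'` and `ϑ'` and `z` is at least `z₁`, then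
`V` is bounded by the corresponding gain over `c`, up to an exponentially decaying term. -/
theorem limsup_V_le (H : Deadzone Θ D f V Γ ε κ lam a b c) (hω : Adm Θ D ω δ ϑ)
    (h : ∀ T, IsSol (field f V Γ ε) ω y₀ T y) {δ' ϑ' z₁ T : ℝ} (hT : 0 ≤ T)
    (hz : z₁ ≤ (y T).2) (hδ : ∀ᵐ u, T ≤ u → ‖(ω u).2‖ ≤ δ')
    (hϑ : ∀ᵐ u, T ≤ u → ‖(ω u).1‖ ≤ ϑ') :
    limsup (fun t => V (y t)) atTop ≤ gain κ lam a b δ' ϑ' z₁ / c := by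
  have hc := H.c_pos
  refine le_of_forall_pos_le_add fun η hη => ?_
  have hcob : IsCoboundedUnder (· ≤ ·) atTop fun t => V (y t) :=
    isCoboundedUnder_le_of_le atTop (x := 0) fun t => H.V_nonneg _
  refine limsup_le_of_le hcob ?_
  have ht : Tendsto (fun t : ℝ => Real.exp (-c * (t - T)) * V (y T)) atTop (𝓝 (0 * V (y T))) := by
    refine Tendsto.mul_const _ (Real.tendsto_exp_atBot.comp ?_)
    exact (tendsto_atTop_add_const_right atTop (-T) tendsto_id).const_mul_atTop_of_neg
      (neg_lt_zero.2 hc)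
  rw [zero_mul] at ht
  filter_upwards [ht.eventually (gt_mem_nhds hη), eventually_ge_atTop T] with t h1 h2
  have h3 := H.V_le hω (h t) hT h2 le_rfl hz hδ hϑ
  have h4 : 0 ≤ gain κ lam a b δ' ϑ' z₁ / c := div_nonneg (gain_nonneg H.hκ H.a_pos _ _ _) hc.le
  have h5 : gain κ lam a b δ' ϑ' z₁ / c * (1 - Real.exp (-c * (t - T))) ≤
      gain κ lam a b δ' ϑ' z₁ / c * 1 := by
    gcongr
    linarith [Real.exp_pos (-c * (t - T))]
  linarith

end Deadzone

/-! ### Essential bounds of signals -/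

theorem eventually_ae_of_inf {p : ℝ → Prop} (h : ∀ᶠ t in atTop ⊓ ae volume, p t) :
    ∃ T, ∀ᵐ t, T ≤ t → p t := by
  obtain ⟨s, hs, s', hs', hp⟩ := mem_inf_iff.1 h
  obtain ⟨T, hT⟩ := mem_atTop_sets.1 hs
  refine ⟨T, ?_⟩
  filter_upwards [hs'] with t ht hTt
  have : t ∈ s ∩ s' := ⟨hT t hTt, ht⟩
  rw [← hp] at this
  exact this

section Signals

variable {E : Type*} [NormedAddCommGroup E] [MeasurableSpace E] {d : ℝ → E}

theorem ae_norm_le_essNorm (hd : eLpNorm d ⊤ (volume.restrict (Ici (0 : ℝ))) < ⊤) :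
    ∀ᵐ t, 0 ≤ t → ‖d t‖ ≤ essNorm d := by
  have h := ae_le_eLpNormEssSup (f := d) (μ := volume.restrict (Ici (0 : ℝ)))
  rw [ae_restrict_iff' measurableSet_Ici] at h
  filter_upwards [h] with t ht h0
  have h1 := ht h0
  rw [← eLpNorm_exponent_top] at h1
  have h2 := ENNReal.toReal_mono hd.ne h1
  simpa [essNorm] using h2

theorem exists_ae_norm_le_limsup_add (hd : eLpNorm d ⊤ (volume.restrict (Ici (0 : ℝ))) < ⊤)
    {η : ℝ} (hη : 0 < η) :
    ∃ T, ∀ᵐ t, T ≤ t → ‖d t‖ ≤ limsup (fun t => ‖d t‖) (atTop ⊓ ae volume) + η := by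
  have hev : ∀ᶠ t in atTop ⊓ ae volume, ‖d t‖ ≤ essNorm d := by
    have h1 : ∀ᶠ t in atTop ⊓ ae (volume : Measure ℝ), 0 ≤ t :=
      (eventually_ge_atTop (0 : ℝ)).filter_mono inf_le_left
    have h2 : ∀ᶠ t in atTop ⊓ ae (volume : Measure ℝ), 0 ≤ t → ‖d t‖ ≤ essNorm d :=
      Filter.Eventually.filter_mono inf_le_right (ae_norm_le_essNorm hd)
    filter_upwards [h1, h2] with t ht ht' using ht' ht
  have hbdd : IsBoundedUnder (· ≤ ·) (atTop ⊓ ae volume) fun t => ‖d t‖ :=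
    isBoundedUnder_of_eventually_le hev
  refine eventually_ae_of_inf ?_
  exact (eventually_lt_of_limsup_lt (lt_add_of_pos_right _ hη) hbdd).mono fun t ht => ht.le

end Signals

/-! ### Conclusion -/

/-- Theorem 2: Lyapunov conditions for systems with deadzone. -/
theorem deadzone_lyapunov (n p l : ℕ)
    (Θ : Set (EuclideanSpace ℝ (Fin p))) (D : Set (EuclideanSpace ℝ (Fin l)))
    (hΘ : Θ.Nonempty) (hD : D.Nonempty)
    (f : EuclideanSpace ℝ (Fin n) → ℝ → EuclideanSpace ℝ (Fin p) →
        EuclideanSpace ℝ (Fin l) → EuclideanSpace ℝ (Fin n))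
    (Γ ε : ℝ) (hΓ : 0 < Γ) (hε : 0 < ε)
    (hf : LocallyLipschitz fun q : (EuclideanSpace ℝ (Fin n) × ℝ) ×
        (EuclideanSpace ℝ (Fin p) × EuclideanSpace ℝ (Fin l)) =>
        f q.1.1 q.1.2 q.2.1 q.2.2)
    (hf0 : ∀ (z : ℝ) (θ : EuclideanSpace ℝ (Fin p)), θ ∈ Θ → f 0 z θ 0 = 0)
    (V : EuclideanSpace ℝ (Fin n) × ℝ → ℝ)
    (hV : ContDiff ℝ 1 V) (hV0 : ∀ z : ℝ, V (0, z) = 0)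
    (hVpos : ∀ (x : EuclideanSpace ℝ (Fin n)) (z : ℝ), x ≠ 0 → 0 < V (x, z))
    (hbdd : ∀ M : ℝ, 0 < M → Bornology.IsBounded
        {q : EuclideanSpace ℝ (Fin n) × ℝ | q.2 ∈ Icc (-M) M ∧ V q ≤ M})
    (κ lam : ℝ → ℝ) (hκ : ClassKInf κ) (hlam : ClassKInf lam)
    (a b c : ℝ) (ha : 0 < a) (hb : 0 < b) (hc : 0 < c)
    (hdiss : ∀ (x : EuclideanSpace ℝ (Fin n)) (z : ℝ) (θ : EuclideanSpace ℝ (Fin p))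
        (d : EuclideanSpace ℝ (Fin l)), θ ∈ Θ → d ∈ D →
      fderiv ℝ V (x, z) (f x z θ d, Γ * Real.exp (-z) * max (V (x, z) - ε) 0)
        ≤ -c * V (x, z) +
          a * (‖d‖^2 + (max (‖θ‖ - b - lam (Real.exp z)) 0)^2) / (1 + κ (Real.exp z))) :
    ∃ B : (EuclideanSpace ℝ (Fin n) × ℝ) × ℝ × ℝ → ℝ, Continuous B ∧
      ∀ (x₀ : EuclideanSpace ℝ (Fin n)) (z₀ : ℝ)
        (d : ℝ → EuclideanSpace ℝ (Fin l)) (θ : ℝ → EuclideanSpace ℝ (Fin p)),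
        Measurable d → Measurable θ → (∀ t, d t ∈ D) → (∀ t, θ t ∈ Θ) →
        eLpNorm d ⊤ (volume.restrict (Set.Ici (0:ℝ))) < ⊤ →
        eLpNorm θ ⊤ (volume.restrict (Set.Ici (0:ℝ))) < ⊤ →
        ∃ (x : ℝ → EuclideanSpace ℝ (Fin n)) (z : ℝ → ℝ),
          x 0 = x₀ ∧ z 0 = z₀ ∧
          -- (x, z) is a (Carathéodory) solution on [0, ∞)
          (∀ t, 0 ≤ t →
            IntervalIntegrable (fun s => f (x s) (z s) (θ s) (d s)) volume 0 t ∧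
            x t = x₀ + ∫ s in (0:ℝ)..t, f (x s) (z s) (θ s) (d s) ∧
            z t = z₀ + ∫ s in (0:ℝ)..t,
              Γ * Real.exp (-(z s)) * max (V (x s, z s) - ε) 0) ∧
          -- uniqueness of the solution
          (∀ (x' : ℝ → EuclideanSpace ℝ (Fin n)) (z' : ℝ → ℝ),
            x' 0 = x₀ → z' 0 = z₀ →
            (∀ t, 0 ≤ t →
              x' t = x₀ + ∫ s in (0:ℝ)..t, f (x' s) (z' s) (θ s) (d s) ∧
              z' t = z₀ + ∫ s in (0:ℝ)..t,
                Γ * Real.exp (-(z' s)) * max (V (x' s, z' s) - ε) 0) →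
            ∀ t, 0 ≤ t → x' t = x t ∧ z' t = z t) ∧
          -- (2.13)
          limsup (fun t => V (x t, z t)) atTop ≤ ε ∧
          -- (2.14)
          (∃ zl : ℝ, Tendsto z atTop (𝓝 zl) ∧
            (∀ t, 0 ≤ t → z₀ ≤ z t ∧ z t ≤ zl) ∧
            zl ≤ B ((x₀, z₀), essNorm d, essNorm θ)) ∧
          -- (2.15)
          (∀ t, 0 ≤ t → ‖x t‖ ≤ B ((x₀, z₀), essNorm d, essNorm θ)) ∧
          -- (2.16)
          (∀ t, 0 ≤ t → V (x t, z t) ≤ Real.exp (-c * t) * V (x₀, z₀) +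
            a * ((essNorm d)^2 + (max (essNorm θ - b - lam (Real.exp z₀)) 0)^2) /
              (c * (1 + κ (Real.exp z₀)))) ∧
          -- (2.17)
          limsup (fun t => V (x t, z t)) atTop ≤
            a * ((limsup (fun t => ‖d t‖) (atTop ⊓ ae volume))^2 +
              (max ((limsup (fun t => ‖θ t‖) (atTop ⊓ ae volume)) - b -
                lam (Real.exp (limsup z atTop))) 0)^2) /
              (c * (1 + κ (Real.exp (limsup z atTop)))) := by
  have H : Deadzone Θ D f V Γ ε κ lam a b c :=
    { Γ_pos := hΓ, ε_pos := hε, lip := hf, contDiff := hV, bdd := hbdd, hκ := hκ, hlam := hlam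
      a_pos := ha, b_pos := hb, c_pos := hc
      V_nonneg := by
        rintro ⟨x, z⟩
        rcases eq_or_ne x 0 with rfl | hx
        · exact (hV0 z).ge
        · exact (hVpos x z hx).le
      diss := fun y w h1 h2 => hdiss y.1 y.2 w.1 w.2 h1 h2 }
  obtain ⟨B, hBc, hB⟩ := H.exists_continuous_bound
  refine ⟨B, hBc, fun x₀ z₀ d θ hdm hθm hdD hθΘ hd hθ => ?_⟩
  have hω : Deadzone.Adm Θ D (fun t => (θ t, d t)) (essNorm d) (essNorm θ) :=
    { meas := (hθm.prodMk hdm).aestronglyMeasurable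
      mem₁ := hθΘ
      mem₂ := hdD
      bd₁ := ae_norm_le_essNorm hθ
      bd₂ := ae_norm_le_essNorm hd }
  obtain ⟨y, hy⟩ := exists_isSol_of_apriori (y₀ := (x₀, z₀)) H.field_lip hω.meas hω.bd
    (C := B ((x₀, z₀), essNorm d, essNorm θ)) fun T y _ h => hB _ _ _ _ hω T y h
  have hyB : ∀ t, 0 ≤ t → ‖y t‖ ≤ B ((x₀, z₀), essNorm d, essNorm θ) := fun t ht =>
    hB _ _ _ _ hω t y (hy t) t ⟨ht, le_rfl⟩
  have hy0 : y 0 = (x₀, z₀) := (hy 0).zero le_rfl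
  obtain ⟨zl, hlim, hzl, hzlB⟩ := H.exists_z_lim hω hy hyB
  have hcob : IsCoboundedUnder (· ≤ ·) atTop fun t => V (y t) :=
    isCoboundedUnder_le_of_le atTop (x := 0) fun t => H.V_nonneg _
  have hgain : ∀ δ ϑ ζ, a * (δ ^ 2 + (max (ϑ - b - lam (Real.exp ζ)) 0) ^ 2) /
      (c * (1 + κ (Real.exp ζ))) = gain κ lam a b δ ϑ ζ / c := fun δ ϑ ζ => by
    rw [gain, div_div, mul_comm c]
  refine ⟨fun t => (y t).1, fun t => (y t).2, congrArg Prod.fst hy0, congrArg Prod.snd hy0,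
    fun t ht => ?_, fun x' z' _ _ h t ht => ?_, ?_, ⟨zl, hlim, fun t ht => ⟨?_, hzl t ht⟩, hzlB⟩,
    fun t ht => (norm_fst_le _).trans (hyB t ht), fun t ht => ?_, ?_⟩
  · have h1 := H.sol_fst hω (hy t) ⟨ht, le_rfl⟩
    exact ⟨h1.1, h1.2, H.sol_snd hω (hy t) ⟨ht, le_rfl⟩⟩
  · have h1 := unique_of_integral_eq H.field_lip hω.meas hω.bd hy
      (fun t ht => (h t ht).1) (fun t ht => (h t ht).2) t ht
    exact ⟨congrArg Prod.fst h1, congrArg Prod.snd h1⟩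
  · exact le_of_forall_pos_le_add fun η hη =>
      limsup_le_of_le hcob (H.eventually_V_le hω hy hlim hzl hη)
  · have h1 := H.z_mono hω (hy t) le_rfl ht le_rfl
    rwa [hy0] at h1
  · rw [hgain]
    have h1 := H.V_le hω (hy t) le_rfl ht le_rfl (z₁ := z₀) (by rw [hy0]) hω.bd₂ hω.bd₁
    rw [hy0, sub_zero] at h1
    have h2 : 0 ≤ gain κ lam a b (essNorm d) (essNorm θ) z₀ / c :=
      div_nonneg (gain_nonneg hκ ha _ _ _) hc.le
    have h3 := mul_nonneg h2 (Real.exp_pos (-c * t)).le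
    linarith
  · rw [hgain, hlim.limsup_eq]
    set δ := limsup (fun t => ‖d t‖) (atTop ⊓ ae volume)
    set ϑ := limsup (fun t => ‖θ t‖) (atTop ⊓ ae volume)
    have hcont : Continuous fun η : ℝ => gain κ lam a b (δ + η) (ϑ + η) (zl - η) / c :=
      (gain_continuous hκ hlam (by fun_prop) (by fun_prop) (by fun_prop)).div_const c
    have htend : Tendsto (fun η : ℝ => gain κ lam a b (δ + η) (ϑ + η) (zl - η) / c) (𝓝[>] 0)
        (𝓝 (gain κ lam a b δ ϑ zl / c)) := by
      have h1 := hcont.tendsto 0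
      simp only [add_zero, sub_zero] at h1
      exact h1.mono_left nhdsWithin_le_nhds
    refine ge_of_tendsto htend ?_
    filter_upwards [self_mem_nhdsWithin] with η hη
    obtain ⟨T₁, hT₁⟩ := exists_ae_norm_le_limsup_add hd hη
    obtain ⟨T₂, hT₂⟩ := exists_ae_norm_le_limsup_add hθ hη
    obtain ⟨T, ⟨⟨hz, h0⟩, h1⟩, h2⟩ := (((hlim.eventually_const_le
      (sub_lt_self zl hη)).and (eventually_ge_atTop 0)).and (eventually_ge_atTop T₁)
        |>.and (eventually_ge_atTop T₂)).exists
    exact H.limsup_V_le hω hy h0 hz (hT₁.mono fun u hu h => hu (h1.trans h))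
      (hT₂.mono fun u hu h => hu (h2.trans h))
end
end

section
/- (Backstepping Lemma.) Consider the control system ẋ = f(x) + g(x,θ)y + Φ(x)θ + G(x)d, ẏ = h(x,y) + g̃(x,y,θ)u + φ'(x,y)θ + α'(x,y)d, where (x,y) ∈ ℝⁿ × ℝ, u ∈ ℝ, d ∈ ℝˡ, θ ∈ Θ ⊆ ℝᵖ, and f : ℝⁿ → ℝⁿ, g : ℝⁿ × Θ → ℝⁿ, Φ : ℝⁿ → ℝ^{n×p}, G : ℝⁿ → ℝ^{n×l}, h : ℝⁿ × ℝ → ℝ, φ : ℝⁿ × ℝ → ℝᵖ, α : ℝⁿ × ℝ → ℝˡ, g̃ : ℝⁿ × ℝ × Θ → ℝ are smooth with f(0) = 0, Φ(0) = 0, h(0,0) = 0, φ(0,0) = 0. Assume there exist constants a, b, c, Γ, ε > 0, smooth class-K∞ functions κ, λ, smooth functions σ, k, V ∈ C^∞(ℝⁿ × ℝ), η ∈ C^∞(ℝⁿ × ℝ; (0,∞)), μ ∈ C^∞(ℝⁿ) with V(0,z) = k(0,z) = 0 for all z ∈ ℝ and V(x,z) > 0 for x ≠ 0, such that for all θ ∈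 Θ, d ∈ ℝˡ, (x,y,z) ∈ ℝⁿ × ℝ × ℝ: (1) |x|² ≤ σ(x,z) V(x,z); (2) (∂V/∂x)(x,z)(f(x) + g(x,θ)k(x,z) + Φ(x)θ + G(x)d) + (∂V/∂z)(x,z) Γ e^{-z}(V(x,z) − ε)⁺ ≤ −c V(x,z) + a(|d|² + ((|θ| − b − λ(e^z))⁺)²)/(1 + κ(e^z)); (3) g̃(x,y,θ) ≥ η(x,y); (4) |g(x,θ)| ≤ μ(x)(1 + |θ|). Define V̄(x,y,z) = V(x,z) + ½(y − k(x,z))². Then there exist smooth functions σ̄, k̄ ∈ C^∞(ℝⁿ × ℝ × ℝ) with k̄(0,0,z) = 0 for all z ∈ ℝ such that for all d ∈ ℝˡ, θ ∈ Θ, (x,y,z) ∈ ℝⁿ × ℝ × ℝ: |x|² + |y|² ≤ σ̄(x,y,z) V̄(x,y,z), and (∂V̄/∂x)(x,y,z)(f(x) + g(x,θ)y + Φ(x)θ + G(x)d) + (∂V̄/∂z)(x,y,z) Γ e^{-z}(V̄(x,y,z) − ε)⁺ + (∂V̄/∂y)(x,y,z)(h(x,y) + g̃(x,y,θ)k̄(x,y,z)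 + φ'(x,y)θ + α'(x,y)d) ≤ −(c/2) V̄(x,y,z) + 2a(|d|² + ((|θ| − b − λ(e^z))⁺)²)/(1 + κ(e^z)). -/
/-!
Write `w = y - k(x,z)`, `V̄ = V + w²/2` and `s = (|θ| - b - λ(e^z))⁺`, so that `|θ| ≤ b + λ(e^z) + s`.
The derivative of `V̄` along the extended system is the left side of the given dissipation inequality
for `V`, plus a residual, plus `w g̃ k̄`. Since `V ≥ 0` vanishes on `x = 0`, so does its derivative;
likewise `k`, `∂k/∂z`, `f` and `Φ` vanish at `x = 0`, and `h`, `φ` at the origin. Smooth maps that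
vanish at `x = 0` are bounded by `ρ |x|` (`exists_smooth_mul_norm`), and `|y| ≤ |w| + |k|`, hence the
residual is at most `|w| (|x| + |w|) C₁ + |w| C₂ (s + |d|)` with `C₁`, `C₂` continuous functions of
`(x,y,z)` (`residual_bound`).

With `k̄ = -w K`, `K ≥ 0`, the control term is at most `-η K w²`. The products `|w| |x|`, `|w| s` and
`|w| |d|` are split by completing squares into parts absorbed by `(c/2) V ≥ (c/2) |x|² / (σ² + 1)`, by
a second copy of `a (|d|² + s²) / (1 + κ)`, and multiples of `w²` (`scalar_bound`). It remains to have
`K` above a certain continuous function, and a smooth such `K` exists by a partition of unity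
(`exists_smooth_ge`). So `k̄` is smooth although the lower bound on `K`, which involves norms, is only
continuous, and `k̄(0,0,z) = 0` because `w` vanishes there.
-/

open Set Filter
open scoped RealInnerProductSpace

noncomputable section

/-- Partition of unity on a finite-dimensional space: a pointwise convex constraint that is locally
solved by constants is solved by a smooth function. -/
theorem exists_smooth_of_local {E : Type*} [NormedAddCommGroup E] [NormedSpace ℝ E]
    [FiniteDimensional ℝ E] (t : E → Set ℝ) (ht : ∀ x, Convex ℝ (t x))
    (hloc : ∀ x, ∃ c : ℝ, ∀ᶠ y in nhds x, c ∈ t y) :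
    ∃ K : E → ℝ, ContDiff ℝ (⊤ : ℕ∞) K ∧ ∀ x, K x ∈ t x := by
  obtain ⟨K, hK⟩ := exists_contMDiffMap_forall_mem_convex_of_local_const
    (n := (⊤ : ℕ∞)) (modelWithCornersSelf ℝ E) ht hloc
  exact ⟨K, K.contMDiff.contDiff, hK⟩

theorem exists_smooth_ge {E : Type*} [NormedAddCommGroup E] [NormedSpace ℝ E]
    [FiniteDimensional ℝ E] {F : E → ℝ} (hF : Continuous F) :
    ∃ K : E → ℝ, ContDiff ℝ (⊤ : ℕ∞) K ∧ ∀ x, F x ≤ K x := by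
  refine exists_smooth_of_local (fun x => Ici (F x)) (fun x => convex_Ici _) fun x => ?_
  exact ⟨F x + 1, ((hF.tendsto x).eventually_lt_const (lt_add_one _)).mono fun y hy => hy.le⟩

/-- A `C¹` map vanishing on `x = 0` satisfies `‖F (x, z)‖ ≤ ρ (x, z) * ‖x‖` with `ρ` smooth and
nonnegative: near `x = 0` the local Lipschitz constant serves as `ρ`, and elsewhere `F` is locally
bounded while `‖x‖` is bounded away from zero. -/
theorem exists_smooth_mul_norm {E Z W : Type*} [NormedAddCommGroup E] [NormedSpace ℝ E]
    [FiniteDimensional ℝ E] [NormedAddCommGroup Z] [NormedSpace ℝ Z] [FiniteDimensional ℝ Z]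
    [NormedAddCommGroup W] [NormedSpace ℝ W] {F : E × Z → W} (hF : ContDiff ℝ 1 F)
    (h0 : ∀ z, F (0, z) = 0) :
    ∃ ρ : E × Z → ℝ, ContDiff ℝ (⊤ : ℕ∞) ρ ∧ (∀ q, 0 ≤ ρ q) ∧
      ∀ x z, ‖F (x, z)‖ ≤ ρ (x, z) * ‖x‖ := by
  have hconv : ∀ q : E × Z, Convex ℝ {r : ℝ | 0 ≤ r ∧ ‖F q‖ ≤ r * ‖q.1‖} := by
    intro q r hr s hs u v hu hv huv
    refine ⟨by have := hr.1; have := hs.1; simp only [smul_eq_mul]; positivity, ?_⟩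
    have h1 := mul_le_mul_of_nonneg_left hr.2 hu
    have h2 := mul_le_mul_of_nonneg_left hs.2 hv
    have h3 : ‖F q‖ = u * ‖F q‖ + v * ‖F q‖ := by rw [← add_mul, huv, one_mul]
    simp only [smul_eq_mul]
    linarith
  obtain ⟨ρ, hρ, hb⟩ := exists_smooth_of_local _ hconv (fun q => by
    obtain ⟨x₀, z₀⟩ := q
    by_cases hx : x₀ = 0
    · subst hx
      obtain ⟨L, t, ht, hL⟩ := (hF.contDiffAt (x := ((0 : E), z₀))).exists_lipschitzOnWith
      have hproj : Tendsto (fun q : E × Z => ((0 : E), q.2)) (nhds ((0 : E), z₀))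
          (nhds ((0 : E), z₀)) :=
        (by fun_prop : Continuous fun q : E × Z => ((0 : E), q.2)).tendsto' _ _ rfl
      refine ⟨L, ?_⟩
      filter_upwards [ht, hproj.eventually ht] with q hq hq'
      refine ⟨L.2, ?_⟩
      have := hL.norm_sub_le hq hq'
      rw [h0, sub_zero] at this
      refine this.trans_eq ?_
      congr 1
      simp [Prod.norm_def]
    · have hpos : 0 < ‖x₀‖ := norm_pos_iff.2 hx
      have e1 : ∀ᶠ q in nhds (x₀, z₀), ‖F q‖ < ‖F (x₀, z₀)‖ + 1 :=
        (hF.continuous.norm.tendsto _).eventually_lt_const (lt_add_one _)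
      have e2 : ∀ᶠ q : E × Z in nhds (x₀, z₀), ‖x₀‖ / 2 < ‖q.1‖ :=
        (continuous_fst.norm.tendsto (x₀, z₀)).eventually_const_lt (half_lt_self hpos)
      refine ⟨(‖F (x₀, z₀)‖ + 1) / (‖x₀‖ / 2), ?_⟩
      filter_upwards [e1, e2] with q h1 h2
      refine ⟨by positivity, h1.le.trans ?_⟩
      rw [div_mul_eq_mul_div, le_div_iff₀ (by positivity)]
      gcongr)
  exact ⟨ρ, hρ, fun q => (hb q).1, fun x z => (hb (x, z)).2⟩

/-- The final completion of squares. Here `M` is the derivative of `V` along the unperturbed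
subsystem, `R` the residual terms, `W = |y - k|`, `X = |x|`, `e = |d|`, `s = (|θ| - b - λ)⁺` and
`N = 1 + κ`; the gain `K` absorbs every term quadratic in `W`. -/
theorem scalar_bound {a c N V X W s e C1 C2 S η gt K M R : ℝ} (ha : 0 < a) (hc : 0 < c) (hN : 0 < N)
    (hS : 0 < S) (hXV : X ^ 2 ≤ S * V)
    (hη : η ≤ gt) (hK0 : 0 ≤ K)
    (hK : c / 4 + C1 + C1 ^ 2 * S / (2 * c) + C2 ^ 2 * N / (2 * a) ≤ η * K)
    (hM : M ≤ -c * V + a * (e ^ 2 + s ^ 2) / N)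
    (hR : R ≤ W * (X + W) * C1 + W * C2 * (s + e)) :
    M + R - gt * K * W ^ 2 ≤ -(c / 2) * (V + 1 / 2 * W ^ 2) + 2 * a * (e ^ 2 + s ^ 2) / N := by
  have hgt : η * K * W ^ 2 ≤ gt * K * W ^ 2 := by gcongr
  have hK' := mul_le_mul_of_nonneg_right hK (sq_nonneg W)
  have hV : X ^ 2 / S ≤ V := by rw [div_le_iff₀ hS]; linarith
  have hV' := mul_le_mul_of_nonneg_left hV hc.le
  have q1 : W * X * C1 ≤ c * (X ^ 2 / S) / 2 + C1 ^ 2 * S / (2 * c) * W ^ 2 := by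
    have : 0 ≤ (c * X - S * C1 * W) ^ 2 / (2 * c * S) := by positivity
    have e : (c * X - S * C1 * W) ^ 2 / (2 * c * S)
        = c * (X ^ 2 / S) / 2 + C1 ^ 2 * S / (2 * c) * W ^ 2 - W * X * C1 := by
      field_simp; ring
    linarith
  have q2 : ∀ t : ℝ, W * C2 * t ≤ a * t ^ 2 / N + C2 ^ 2 * N / (4 * a) * W ^ 2 := by
    intro t
    have : 0 ≤ (2 * a * t - N * C2 * W) ^ 2 / (4 * a * N) := by positivity
    have e : (2 * a * t - N * C2 * W) ^ 2 / (4 * a * N)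
        = a * t ^ 2 / N + C2 ^ 2 * N / (4 * a) * W ^ 2 - W * C2 * t := by
      field_simp; ring
    linarith
  have q2s := q2 s
  have q2e := q2 e
  have e1 : a * (e ^ 2 + s ^ 2) / N = a * e ^ 2 / N + a * s ^ 2 / N := by ring
  have e2 : 2 * a * (e ^ 2 + s ^ 2) / N = 2 * (a * e ^ 2 / N) + 2 * (a * s ^ 2 / N) := by ring
  have e3 : C2 ^ 2 * N / (2 * a) = 2 * (C2 ^ 2 * N / (4 * a)) := by field_simp; ring
  rw [e1] at hM
  rw [e2]
  rw [e3] at hK'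
  linarith

/-- Bound on the terms created by adding the state `y`. With `w = y - k`, `W = |w|`, `X = |x|`,
`Y = |y|`, `T = |θ|`, `e = |d|`, the derivative of `V` contributes `w * A1 + r * A2` (`A1` from
`g`, and `r` from the change of `(V - ε)⁺` to `(Vb - ε)⁺`), and `w²/2` contributes the last term,
where `hh`, `ph`, `al` come from the `y`-equation and `kk` is the derivative of `k`. Each `ρi` is the
factor in an estimate by `X` or `X + Y`. -/
theorem residual_bound {w X W Y T B s e E Vb r A1 A2 hh ph al kk
      μ ρ1 ρ2 ρ3 ρ4 ρ5 ρ6 ρ7 DV Dk αn Gn : ℝ}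
    (hWw : W = |w|) (hX : 0 ≤ X) (hT0 : 0 ≤ T) (hs : 0 ≤ s) (he : 0 ≤ e)
    (hE : 0 ≤ E) (hVb : 0 ≤ Vb) (hμ : 0 ≤ μ) (h1 : 0 ≤ ρ1) (h2 : 0 ≤ ρ2) (h3 : 0 ≤ ρ3)
    (h4 : 0 ≤ ρ4) (h5 : 0 ≤ ρ5) (h6 : 0 ≤ ρ6) (h7 : 0 ≤ ρ7) (hDV : 0 ≤ DV) (hDk : 0 ≤ Dk)
    (hαn : 0 ≤ αn) (hGn : 0 ≤ Gn)
    (hT : T ≤ B + s) (hY : Y ≤ W + ρ3 * X)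
    (hr0 : 0 ≤ r) (hr : r ≤ E * (W ^ 2 / 2))
    (hA1 : |A1| ≤ ρ1 * X * (μ * (1 + T))) (hA2 : |A2| ≤ DV)
    (hhh : |hh| ≤ ρ2 * (X + Y)) (hph : |ph| ≤ ρ4 * (X + Y) * T) (hal : |al| ≤ αn * e)
    (hkk : |kk| ≤ Dk * (ρ5 * X + Y * (μ * (1 + T)) + ρ6 * X * T + Gn * e)
      + ρ7 * X * (E * Vb)) :
    w * A1 + r * A2 + w * (hh + ph + al - kk)
      ≤ W * (X + W) * (ρ1 * μ * (1 + B) + E * DV / 2 + (ρ2 + ρ4 * B) * (2 + ρ3)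
          + Dk * (ρ5 + (1 + ρ3) * μ * (1 + B) + ρ6 * B) + ρ7 * (E * Vb))
        + W * ((X + W) * (ρ1 * μ + ρ4 * (2 + ρ3) + Dk * ((1 + ρ3) * μ + ρ6))
          + (αn + Dk * Gn)) * (s + e) := by
  have hW : 0 ≤ W := hWw ▸ abs_nonneg w
  obtain ⟨S, hS⟩ : ∃ S, S = X + W := ⟨_, rfl⟩
  have hXS : X ≤ S := by linarith
  have hWS : W ≤ S := by linarith
  have hS0 : 0 ≤ S := by linarith
  have hYS : Y ≤ (1 + ρ3) * S := by nlinarith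
  have hXYS : X + Y ≤ (2 + ρ3) * S := by nlinarith
  have key : ∀ u : ℝ, w * u ≤ W * |u| := fun u => by
    rw [hWw, ← abs_mul]; exact le_abs_self _
  have b1 : |A1| ≤ ρ1 * S * (μ * (1 + (B + s))) := hA1.trans (by gcongr)
  have b2 : r * A2 ≤ E * (W * S / 2) * DV := by
    have : r * A2 ≤ r * DV := by gcongr; exact (le_abs_self _).trans hA2
    refine this.trans ?_
    gcongr
    refine hr.trans ?_
    gcongr
    nlinarith
  have b3 : |hh| ≤ ρ2 * ((2 + ρ3) * S) := hhh.trans (by gcongr)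
  have b4 : |ph| ≤ ρ4 * ((2 + ρ3) * S) * (B + s) := hph.trans (by gcongr)
  have b5 : |kk| ≤ Dk * (ρ5 * S + (1 + ρ3) * S * (μ * (1 + (B + s))) + ρ6 * S * (B + s) + Gn * e)
      + ρ7 * S * (E * Vb) := hkk.trans (by gcongr)
  have b6 : |hh + ph + al - kk| ≤ |hh| + |ph| + |al| + |kk| := by
    refine (abs_sub _ _).trans ?_
    gcongr
    exact abs_add_three _ _ _
  have c1 : w * A1 ≤ W * (ρ1 * S * (μ * (1 + (B + s)))) := (key _).trans (by gcongr)
  have c2 : w * (hh + ph + al - kk) ≤ W * (ρ2 * ((2 + ρ3) * S) + ρ4 * ((2 + ρ3) * S) * (B + s)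
      + αn * e + (Dk * (ρ5 * S + (1 + ρ3) * S * (μ * (1 + (B + s))) + ρ6 * S * (B + s) + Gn * e)
      + ρ7 * S * (E * Vb))) := (key _).trans (by gcongr; linarith)
  have n1 : 0 ≤ W * S * (ρ1 * μ + ρ4 * (2 + ρ3) + Dk * ((1 + ρ3) * μ + ρ6)) * e := by positivity
  have n2 : 0 ≤ W * (αn + Dk * Gn) * s := by positivity
  rw [← hS]
  linarith

/-- The derivative of `V + (y - k)² / 2` in the direction `(v, u, t)`. -/
theorem fderiv_lyapunov {E : Type*} [NormedAddCommGroup E] [NormedSpace ℝ E]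
    {V k : E × ℝ → ℝ} (hV : Differentiable ℝ V) (hk : Differentiable ℝ k)
    (x : E) (y z : ℝ) (v : E) (u t : ℝ) :
    fderiv ℝ (fun q : E × ℝ × ℝ => V (q.1, q.2.2) + (1/2) * (q.2.1 - k (q.1, q.2.2))^2) (x, y, z)
        (v, u, t)
      = fderiv ℝ V (x, z) (v, t) + (y - k (x, z)) * (u - fderiv ℝ k (x, z) (v, t)) := by
  let π : E × ℝ × ℝ →L[ℝ] E × ℝ :=
    (ContinuousLinearMap.fst ℝ E (ℝ × ℝ)).prod
      ((ContinuousLinearMap.snd ℝ ℝ ℝ).comp (ContinuousLinearMap.snd ℝ E (ℝ × ℝ)))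
  let pr : E × ℝ × ℝ →L[ℝ] ℝ :=
    (ContinuousLinearMap.fst ℝ ℝ ℝ).comp (ContinuousLinearMap.snd ℝ E (ℝ × ℝ))
  have hπ : HasFDerivAt (fun q : E × ℝ × ℝ => (q.1, q.2.2)) π (x, y, z) := π.hasFDerivAt
  have hpr : HasFDerivAt (fun q : E × ℝ × ℝ => q.2.1) pr (x, y, z) := pr.hasFDerivAt
  have hV' : HasFDerivAt (fun q : E × ℝ × ℝ => V (q.1, q.2.2)) ((fderiv ℝ V (x, z)).comp π)
      (x, y, z) := HasFDerivAt.comp (g := V) (x, y, z) (hV (x, z)).hasFDerivAt hπ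
  have hk' : HasFDerivAt (fun q : E × ℝ × ℝ => k (q.1, q.2.2)) ((fderiv ℝ k (x, z)).comp π)
      (x, y, z) := HasFDerivAt.comp (g := k) (x, y, z) (hk (x, z)).hasFDerivAt hπ
  have hsum := hV'.add (((hpr.sub hk').pow 2).const_mul (1 / 2))
  have e : (fun q : E × ℝ × ℝ => V (q.1, q.2.2) + (1/2) * (q.2.1 - k (q.1, q.2.2))^2)
     = ((fun q : E × ℝ × ℝ => V (q.1, q.2.2)) + fun q : E × ℝ × ℝ =>
       (1/2) * ((fun q : E × ℝ × ℝ => q.2.1) - fun q : E × ℝ × ℝ => k (q.1, q.2.2)) q ^2) := rfl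
  rw [e, hsum.fderiv]
  simp [π, pr]
  ring

set_option maxHeartbeats 2000000 in
/-- Backstepping Lemma, Lemma 4 of the paper. -/
theorem backstepping_lemma (n p l : ℕ)
    (Θ : Set (EuclideanSpace ℝ (Fin p))) (hΘ : Θ.Nonempty)
    (f : EuclideanSpace ℝ (Fin n) → EuclideanSpace ℝ (Fin n))
    (g : EuclideanSpace ℝ (Fin n) → EuclideanSpace ℝ (Fin p) → EuclideanSpace ℝ (Fin n))
    (Φ : EuclideanSpace ℝ (Fin n) → EuclideanSpace ℝ (Fin p) →L[ℝ] EuclideanSpace ℝ (Fin n))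
    (G : EuclideanSpace ℝ (Fin n) → EuclideanSpace ℝ (Fin l) →L[ℝ] EuclideanSpace ℝ (Fin n))
    (h : EuclideanSpace ℝ (Fin n) × ℝ → ℝ)
    (φ : EuclideanSpace ℝ (Fin n) × ℝ → EuclideanSpace ℝ (Fin p))
    (α : EuclideanSpace ℝ (Fin n) × ℝ → EuclideanSpace ℝ (Fin l))
    (gt : EuclideanSpace ℝ (Fin n) → ℝ → EuclideanSpace ℝ (Fin p) → ℝ)
    (hf : ContDiff ℝ (⊤ : ℕ∞) f)
    (hg : ∀ θ ∈ Θ, ContDiff ℝ (⊤ : ℕ∞) (fun x => g x θ))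
    (hΦ : ContDiff ℝ (⊤ : ℕ∞) Φ) (hG : ContDiff ℝ (⊤ : ℕ∞) G)
    (hh : ContDiff ℝ (⊤ : ℕ∞) h) (hφ : ContDiff ℝ (⊤ : ℕ∞) φ) (hα : ContDiff ℝ (⊤ : ℕ∞) α)
    (hgt : ∀ θ ∈ Θ, ContDiff ℝ (⊤ : ℕ∞) (fun q : EuclideanSpace ℝ (Fin n) × ℝ => gt q.1 q.2 θ))
    (hf0 : f 0 = 0) (hΦ0 : Φ 0 = 0) (hh0 : h (0, 0) = 0) (hφ0 : φ (0, 0) = 0)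
    (a b c Γ ε : ℝ) (ha : 0 < a) (hb : 0 < b) (hc : 0 < c) (hΓ : 0 < Γ) (hε : 0 < ε)
    (κ lam : ℝ → ℝ)
    (hκ : ClassKInf κ) (hκs : ContDiffOn ℝ (⊤ : ℕ∞) κ (Ici 0))
    (hlam : ClassKInf lam) (hlams : ContDiffOn ℝ (⊤ : ℕ∞) lam (Ici 0))
    (σ k V : EuclideanSpace ℝ (Fin n) × ℝ → ℝ)
    (η : EuclideanSpace ℝ (Fin n) × ℝ → ℝ) (μ : EuclideanSpace ℝ (Fin n) → ℝ)
    (hσ : ContDiff ℝ (⊤ : ℕ∞) σ) (hk : ContDiff ℝ (⊤ : ℕ∞) k) (hV : ContDiff ℝ (⊤ : ℕ∞) V)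
    (hη : ContDiff ℝ (⊤ : ℕ∞) η) (hηpos : ∀ q, 0 < η q) (hμ : ContDiff ℝ (⊤ : ℕ∞) μ)
    (hV0 : ∀ z : ℝ, V (0, z) = 0) (hk0 : ∀ z : ℝ, k (0, z) = 0)
    (hVpos : ∀ (x : EuclideanSpace ℝ (Fin n)) (z : ℝ), x ≠ 0 → 0 < V (x, z))
    (h1 : ∀ (x : EuclideanSpace ℝ (Fin n)) (z : ℝ), ‖x‖^2 ≤ σ (x, z) * V (x, z))
    (h2 : ∀ (x : EuclideanSpace ℝ (Fin n)) (z : ℝ) (θ : EuclideanSpace ℝ (Fin p))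
        (d : EuclideanSpace ℝ (Fin l)), θ ∈ Θ →
      fderiv ℝ V (x, z)
          (f x + k (x, z) • g x θ + Φ x θ + G x d,
            Γ * Real.exp (-z) * max (V (x, z) - ε) 0)
        ≤ -c * V (x, z) +
            a * (‖d‖^2 + (max (‖θ‖ - b - lam (Real.exp z)) 0)^2) / (1 + κ (Real.exp z)))
    (h3 : ∀ (x : EuclideanSpace ℝ (Fin n)) (y : ℝ) (θ : EuclideanSpace ℝ (Fin p)),
      θ ∈ Θ → η (x, y) ≤ gt x y θ)
    (h4 : ∀ (x : EuclideanSpace ℝ (Fin n)) (θ : EuclideanSpace ℝ (Fin p)),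
      θ ∈ Θ → ‖g x θ‖ ≤ μ x * (1 + ‖θ‖)) :
    ∃ σb kb : EuclideanSpace ℝ (Fin n) × ℝ × ℝ → ℝ,
      ContDiff ℝ (⊤ : ℕ∞) σb ∧ ContDiff ℝ (⊤ : ℕ∞) kb ∧ (∀ z : ℝ, kb (0, 0, z) = 0) ∧
      ∀ (x : EuclideanSpace ℝ (Fin n)) (y z : ℝ) (θ : EuclideanSpace ℝ (Fin p))
        (d : EuclideanSpace ℝ (Fin l)), θ ∈ Θ →
        (‖x‖^2 + y^2 ≤ σb (x, y, z) * (V (x, z) + (1/2) * (y - k (x, z))^2)) ∧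
        (fderiv ℝ (fun q : EuclideanSpace ℝ (Fin n) × ℝ × ℝ =>
              V (q.1, q.2.2) + (1/2) * (q.2.1 - k (q.1, q.2.2))^2) (x, y, z)
            (f x + y • g x θ + Φ x θ + G x d,
              h (x, y) + gt x y θ * kb (x, y, z) + ⟪φ (x, y), θ⟫ + ⟪α (x, y), d⟫,
              Γ * Real.exp (-z) *
                max ((V (x, z) + (1/2) * (y - k (x, z))^2) - ε) 0)
          ≤ -(c/2) * (V (x, z) + (1/2) * (y - k (x, z))^2) +
              2 * a * (‖d‖^2 + (max (‖θ‖ - b - lam (Real.exp z)) 0)^2) /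
                (1 + κ (Real.exp z))) := by
  have h1le : (1 : WithTop ℕ∞) ≤ ((⊤ : ℕ∞) : WithTop ℕ∞) := by exact_mod_cast le_top
  have h2le : (1 : WithTop ℕ∞) + 1 ≤ ((⊤ : ℕ∞) : WithTop ℕ∞) := by
    rw [one_add_one_eq_two]
    exact WithTop.coe_le_coe.2 (le_top : (2 : ℕ∞) ≤ ⊤)
  have hVd : Differentiable ℝ V := hV.differentiable (by simp)
  have hkd : Differentiable ℝ k := hk.differentiable (by simp)
  have hV1 : ContDiff ℝ 1 (fderiv ℝ V) := hV.fderiv_right h2le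
  have hk1 : ContDiff ℝ 1 (fderiv ℝ k) := hk.fderiv_right h2le
  have hVnn : ∀ x z, 0 ≤ V (x, z) := fun x z => by
    by_cases hx : x = 0
    · rw [hx, hV0]
    · exact (hVpos x z hx).le
  -- `V ≥ 0` attains its minimum at every point `(0, z)`.
  have hDV0 : ∀ z : ℝ, fderiv ℝ V (0, z) = 0 := fun z =>
    IsLocalMin.fderiv_eq_zero (Eventually.of_forall fun q => by rw [hV0]; exact hVnn q.1 q.2)
  -- `k` is constant along the line `x = 0`.
  have hkz0 : ∀ z : ℝ, fderiv ℝ k (0, z) (0, 1) = 0 := fun z => by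
    have hline : HasDerivAt (fun t : ℝ => ((0 : EuclideanSpace ℝ (Fin n)), t)) (0, 1) z :=
      (hasDerivAt_const z _).prodMk (hasDerivAt_id z)
    have hcomp := (hkd (0, z)).hasFDerivAt.comp_hasDerivAt z hline
    have hzero : (k ∘ fun t : ℝ => ((0 : EuclideanSpace ℝ (Fin n)), t)) = fun _ => 0 :=
      funext hk0
    rw [hzero] at hcomp
    exact hcomp.unique (hasDerivAt_const z 0)
  -- nonnegativity of `μ` follows from the growth bound at any single parameter value
  obtain ⟨θ₀, hθ₀⟩ := hΘ
  have hμ0 : ∀ x, 0 ≤ μ x := fun x => by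
    have := (norm_nonneg _).trans (h4 x θ₀ hθ₀)
    exact nonneg_of_mul_nonneg_left this (by positivity)
  have hκ0 : ∀ z : ℝ, 0 < 1 + κ (Real.exp z) := fun z => by
    have := hκ.2.1 self_mem_Ici (Real.exp_pos z).le (Real.exp_pos z)
    rw [hκ.2.2.1] at this
    linarith
  obtain ⟨N, hNc, hN⟩ : ∃ N : ℝ → ℝ, Continuous N ∧ ∀ z, N z = κ (Real.exp z) :=
    ⟨_, hκ.1.comp_continuous Real.continuous_exp fun z => (Real.exp_pos z).le, fun _ => rfl⟩
  obtain ⟨L, hLc, hL⟩ : ∃ L : ℝ → ℝ, Continuous L ∧ ∀ z, L z = lam (Real.exp z) :=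
    ⟨_, hlam.1.comp_continuous Real.continuous_exp fun z => (Real.exp_pos z).le, fun _ => rfl⟩
  simp only [← hN, ← hL] at h2 hκ0 ⊢
  obtain ⟨ρ1, hρ1, hρ1n, B1⟩ := exists_smooth_mul_norm hV1 hDV0
  obtain ⟨ρ2, hρ2, hρ2n, B2⟩ := exists_smooth_mul_norm (Z := ℝ)
    (F := fun q : (EuclideanSpace ℝ (Fin n) × ℝ) × ℝ => h q.1)
    ((hh.of_le h1le).comp contDiff_fst) (fun _ => hh0)
  obtain ⟨ρ3, hρ3, hρ3n, B3⟩ := exists_smooth_mul_norm (hk.of_le h1le) hk0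
  obtain ⟨ρ4, hρ4, hρ4n, B4⟩ := exists_smooth_mul_norm (Z := ℝ)
    (F := fun q : (EuclideanSpace ℝ (Fin n) × ℝ) × ℝ => φ q.1)
    ((hφ.of_le h1le).comp contDiff_fst) (fun _ => hφ0)
  obtain ⟨ρ5, hρ5, hρ5n, B5⟩ := exists_smooth_mul_norm (Z := ℝ)
    (F := fun q : EuclideanSpace ℝ (Fin n) × ℝ => f q.1)
    ((hf.of_le h1le).comp contDiff_fst) (fun _ => hf0)
  obtain ⟨ρ6, hρ6, hρ6n, B6⟩ := exists_smooth_mul_norm (Z := ℝ)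
    (F := fun q : EuclideanSpace ℝ (Fin n) × ℝ => Φ q.1)
    ((hΦ.of_le h1le).comp contDiff_fst) (fun _ => hΦ0)
  obtain ⟨ρ7, hρ7, hρ7n, B7⟩ := exists_smooth_mul_norm
    (F := fun q : EuclideanSpace ℝ (Fin n) × ℝ => fderiv ℝ k q (0, 1))
    (hk1.clm_apply contDiff_const) hkz0
  -- `σ` may be negative at `x = 0`; `σ ^ 2 + 1 > 0` dominates it
  have hXV : ∀ x z, ‖x‖ ^ 2 ≤ (σ (x, z) ^ 2 + 1) * V (x, z) := fun x z =>
    (h1 x z).trans (by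
      gcongr
      · exact hVnn x z
      · nlinarith [sq_nonneg (σ (x, z) - 1)])
  have hDVc := hV1.continuous
  have hDkc := hk1.continuous
  have hVc := hV.continuous
  have hkc := hk.continuous
  have hσc := hσ.continuous
  have hηc := hη.continuous
  have hμc := hμ.continuous
  have hGc := hG.continuous
  have hαc := hα.continuous
  have hρ1c := hρ1.continuous
  have hρ2c := hρ2.continuous
  have hρ3c := hρ3.continuous
  have hρ4c := hρ4.continuous
  have hρ5c := hρ5.continuous
  have hρ6c := hρ6.continuous
  have hρ7c := hρ7.continuous
  -- the coefficients of `W * (X + W)` and `W * (s + e)` in `residual_bound`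
  obtain ⟨C1, hC1c, hC1⟩ : ∃ C1 : EuclideanSpace ℝ (Fin n) × ℝ × ℝ → ℝ, Continuous C1 ∧
      ∀ q, C1 q = ρ1 (q.1, q.2.2) * μ q.1 * (1 + (b + L q.2.2))
          + Γ * Real.exp (-q.2.2) * ‖fderiv ℝ V (q.1, q.2.2)‖ / 2
          + (ρ2 ((q.1, q.2.1), q.2.2) + ρ4 ((q.1, q.2.1), q.2.2) * (b + L q.2.2)) * (2 + ρ3 (q.1, q.2.2))
          + ‖fderiv ℝ k (q.1, q.2.2)‖ * (ρ5 (q.1, q.2.2) + (1 + ρ3 (q.1, q.2.2)) * μ q.1 * (1 + (b + L q.2.2))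
            + ρ6 (q.1, q.2.2) * (b + L q.2.2))
          + ρ7 (q.1, q.2.2) * (Γ * Real.exp (-q.2.2) * (V (q.1, q.2.2) + (1/2) * (q.2.1 - k (q.1, q.2.2))^2)) := by
    refine ⟨_, ?_, fun _ => rfl⟩
    fun_prop
  obtain ⟨C2, hC2c, hC2⟩ : ∃ C2 : EuclideanSpace ℝ (Fin n) × ℝ × ℝ → ℝ, Continuous C2 ∧
      ∀ q, C2 q = (‖q.1‖ + |q.2.1 - k (q.1, q.2.2)|) * (ρ1 (q.1, q.2.2) * μ q.1
          + ρ4 ((q.1, q.2.1), q.2.2) * (2 + ρ3 (q.1, q.2.2))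
          + ‖fderiv ℝ k (q.1, q.2.2)‖ * ((1 + ρ3 (q.1, q.2.2)) * μ q.1 + ρ6 (q.1, q.2.2)))
          + (‖α (q.1, q.2.1)‖ + ‖fderiv ℝ k (q.1, q.2.2)‖ * ‖G q.1‖) := by
    refine ⟨_, ?_, fun _ => rfl⟩
    fun_prop
  -- the gain: only a continuous lower bound is needed, and a smooth function dominates it
  obtain ⟨K, hK, hKge⟩ : ∃ K : EuclideanSpace ℝ (Fin n) × ℝ × ℝ → ℝ, ContDiff ℝ (⊤ : ℕ∞) K ∧
      ∀ q : EuclideanSpace ℝ (Fin n) × ℝ × ℝ,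
        (c / 4 + |C1 q| + C1 q ^ 2 * (σ (q.1, q.2.2) ^ 2 + 1) / (2 * c)
          + C2 q ^ 2 * (1 + N q.2.2) / (2 * a)) / η (q.1, q.2.1) ≤ K q := by
    apply exists_smooth_ge
    refine Continuous.div ?_ (by fun_prop) fun q => (hηpos _).ne'
    fun_prop
  refine ⟨fun q => (1 + 2 * ρ3 (q.1, q.2.2) ^ 2) * (σ (q.1, q.2.2) ^ 2 + 1) + 4,
    fun q => -((q.2.1 - k (q.1, q.2.2)) * K q), by fun_prop, by fun_prop,
    fun z => by simp [hk0], fun x y z θ d hθ => ⟨?_, ?_⟩⟩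
  · have hkx : k (x, z) ^ 2 ≤ ρ3 (x, z) ^ 2 * ‖x‖ ^ 2 := by
      rw [← mul_pow, ← sq_abs]
      exact pow_le_pow_left₀ (abs_nonneg _) (B3 x z) 2
    have hx := mul_le_mul_of_nonneg_left (hXV x z)
      (by positivity : 0 ≤ 1 + 2 * ρ3 (x, z) ^ 2)
    have hw : 0 ≤ (1 + 2 * ρ3 (x, z) ^ 2) * (σ (x, z) ^ 2 + 1) * (y - k (x, z)) ^ 2 := by
      positivity
    dsimp only
    nlinarith [hVnn x z, sq_nonneg (y - 2 * k (x, z))]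
  · rw [fderiv_lyapunov hVd hkd]
    dsimp only
    obtain ⟨w, hw⟩ : ∃ w, w = y - k (x, z) := ⟨_, rfl⟩
    obtain ⟨s, hs⟩ : ∃ s, s = max (‖θ‖ - b - L z) 0 := ⟨_, rfl⟩
    obtain ⟨E, hE⟩ : ∃ E, E = Γ * Real.exp (-z) := ⟨_, rfl⟩
    obtain ⟨Vb, hVb⟩ : ∃ Vb, Vb = V (x, z) + (1/2) * w ^ 2 := ⟨_, rfl⟩
    obtain ⟨F, hF⟩ : ∃ F, F = f x + y • g x θ + Φ x θ + G x d := ⟨_, rfl⟩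
    obtain ⟨r, hr⟩ : ∃ r, r = E * max (Vb - ε) 0 - E * max (V (x, z) - ε) 0 := ⟨_, rfl⟩
    have hE0 : 0 ≤ E := by rw [hE]; positivity
    have hVb0 : 0 ≤ Vb := by have := hVnn x z; rw [hVb]; positivity
    have hM := h2 x z θ d hθ
    have hC1' := hC1 (x, y, z)
    have hC2' := hC2 (x, y, z)
    dsimp only at hC1' hC2'
    rw [← hw, ← hE, ← hVb] at hC1'
    rw [← hw] at hC2'
    rw [← hs, ← hE] at hM
    rw [← hw, ← hs, ← hE, ← hVb, ← hF]
    -- replace `y` by `k + w` in the `x`-direction and `(Vb - ε)⁺` by `(V - ε)⁺` plus a remainder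
    have hsplit : fderiv ℝ V (x, z) (F, E * max (Vb - ε) 0)
        = fderiv ℝ V (x, z) (f x + k (x, z) • g x θ + Φ x θ + G x d, E * max (V (x, z) - ε) 0)
          + (w * fderiv ℝ V (x, z) (g x θ, 0) + r * fderiv ℝ V (x, z) (0, 1)) := by
      rw [← smul_eq_mul w, ← smul_eq_mul r, ← map_smul, ← map_smul, ← map_add, ← map_add]
      congr 1
      refine Prod.ext ?_ ?_
      · simp only [Prod.fst_add, Prod.smul_fst, smul_zero, add_zero, hF, hw]
        module
      · simp only [Prod.snd_add, Prod.smul_snd, hr, smul_eq_mul]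
        ring
    have hksplit : fderiv ℝ k (x, z) (F, E * max (Vb - ε) 0)
        = fderiv ℝ k (x, z) (F, 0) + E * max (Vb - ε) 0 * fderiv ℝ k (x, z) (0, 1) := by
      rw [← smul_eq_mul (E * max (Vb - ε) 0), ← map_smul, ← map_add]
      simp
    have hyb : |y| ≤ |w| + ρ3 (x, z) * ‖x‖ := by
      have hkb := B3 x z
      rw [Real.norm_eq_abs] at hkb
      have : y = w + k (x, z) := by rw [hw]; ring
      calc |y| = |w + k (x, z)| := by rw [← this]
        _ ≤ |w| + |k (x, z)| := abs_add_le _ _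
        _ ≤ _ := by gcongr
    have hxy : ‖((x, y) : EuclideanSpace ℝ (Fin n) × ℝ)‖ ≤ ‖x‖ + |y| := by
      rw [Prod.norm_def]
      exact max_le_add_of_nonneg (norm_nonneg _) (norm_nonneg _)
    have hgn := h4 x θ hθ
    have hFn : ‖F‖ ≤ ρ5 (x, z) * ‖x‖ + |y| * (μ x * (1 + ‖θ‖)) + ρ6 (x, z) * ‖x‖ * ‖θ‖
        + ‖G x‖ * ‖d‖ := by
      rw [hF]
      refine norm_add₄_le.trans ?_
      gcongr
      · exact B5 x z
      · rw [norm_smul, Real.norm_eq_abs]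
        gcongr
      · exact (ContinuousLinearMap.le_opNorm _ _).trans (by gcongr; exact B6 x z)
      · exact ContinuousLinearMap.le_opNorm _ _
    have hmaxVb : max (Vb - ε) 0 ≤ Vb := max_le (by linarith) hVb0
    have hVVb : V (x, z) ≤ Vb := by rw [hVb]; linarith [sq_nonneg w]
    have hr0 : 0 ≤ r := by
      rw [hr, sub_nonneg]
      gcongr
    have hrb : r ≤ E * (|w| ^ 2 / 2) := by
      rw [hr, ← mul_sub, sq_abs]
      gcongr
      have hpos := le_max_left (V (x, z) - ε) 0
      have hpos' := le_max_right (V (x, z) - ε) 0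
      rw [sub_le_iff_le_add]
      refine max_le ?_ ?_
      · rw [hVb]; linarith
      · positivity
    have hR := residual_bound (w := w) (X := ‖x‖) (Y := |y|) (T := ‖θ‖)
      (B := b + L z) (s := s) (e := ‖d‖) (E := E) (Vb := Vb) (r := r)
      (A1 := fderiv ℝ V (x, z) (g x θ, 0)) (A2 := fderiv ℝ V (x, z) (0, 1))
      (hh := h (x, y)) (ph := ⟪φ (x, y), θ⟫) (al := ⟪α (x, y), d⟫)
      (kk := fderiv ℝ k (x, z) (F, E * max (Vb - ε) 0))
      (μ := μ x) (ρ1 := ρ1 (x, z)) (ρ2 := ρ2 ((x, y), z)) (ρ3 := ρ3 (x, z))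
      (ρ4 := ρ4 ((x, y), z)) (ρ5 := ρ5 (x, z)) (ρ6 := ρ6 (x, z)) (ρ7 := ρ7 (x, z))
      (DV := ‖fderiv ℝ V (x, z)‖) (Dk := ‖fderiv ℝ k (x, z)‖) (αn := ‖α (x, y)‖) (Gn := ‖G x‖)
      rfl (norm_nonneg _) (norm_nonneg _) (by rw [hs]; exact le_max_right _ _) (norm_nonneg _)
      hE0 hVb0 (hμ0 x) (hρ1n _) (hρ2n _) (hρ3n _) (hρ4n _) (hρ5n _) (hρ6n _) (hρ7n _)
      (norm_nonneg _) (norm_nonneg _) (norm_nonneg _) (norm_nonneg _)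
      (by rw [hs]; linarith [le_max_left (‖θ‖ - b - L z) 0])
      hyb hr0 hrb
      (by
        refine ((fderiv ℝ V (x, z)).le_opNorm _).trans ?_
        have hg0 : ‖((g x θ, 0) : EuclideanSpace ℝ (Fin n) × ℝ)‖ = ‖g x θ‖ := by
          simp [Prod.norm_def]
        rw [hg0]
        have := hρ1n (x, z)
        gcongr
        exact B1 x z)
      (by
        refine ((fderiv ℝ V (x, z)).le_opNorm _).trans ?_
        simp [Prod.norm_def])
      ((B2 (x, y) z).trans (mul_le_mul_of_nonneg_left hxy (hρ2n _)))
      ((abs_real_inner_le_norm _ _).trans (by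
        gcongr
        exact (B4 (x, y) z).trans (mul_le_mul_of_nonneg_left hxy (hρ4n _))))
      (abs_real_inner_le_norm _ _)
      (by
        rw [hksplit]
        refine (abs_add_le _ _).trans (add_le_add ?_ ?_)
        · refine ((fderiv ℝ k (x, z)).le_opNorm _).trans ?_
          have hF0 : ‖((F, 0) : EuclideanSpace ℝ (Fin n) × ℝ)‖ = ‖F‖ := by
            simp [Prod.norm_def]
          rw [hF0]
          gcongr
        · rw [abs_mul, abs_of_nonneg (mul_nonneg hE0 (le_max_right _ _)), mul_comm]
          have := hρ7n (x, z)
          gcongr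
          exact B7 x z)
    rw [← hC1', ← hC2'] at hR
    have hge := (div_le_iff₀ (hηpos _)).1 (hKge (x, y, z))
    have hK0 : 0 ≤ K (x, y, z) := by
      refine le_trans ?_ (hKge (x, y, z))
      have := hηpos (x, y)
      have := hκ0 z
      positivity
    have hfin := scalar_bound (W := |w|) (S := σ (x, z) ^ 2 + 1) ha hc (hκ0 z) (by positivity)
      (hXV x z) (h3 x y θ hθ) hK0
      (by
        rw [mul_comm (η (x, y))]
        refine le_trans ?_ hge
        gcongr
        exact le_abs_self _)
      hM hR
    rw [sq_abs, ← hVb] at hfin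
    rw [hsplit]
    refine le_trans (le_of_eq ?_) hfin
    ring
end
end

section
/- Let n ≥ 1, let A ∈ ℝ^{n×n} be the nilpotent shift matrix with entries a_{i,i+1} = 1 for i = 1,…,n−1 and all other entries zero, and let b = (0,…,0,1)' ∈ ℝⁿ. Then for every constant μ > 0 there exist a vector ω ∈ ℝⁿ and a symmetric positive definite matrix P ∈ ℝ^{n×n} such that P(A + bω') + (A + bω')'P ≤ −μ P, where the inequality means that μ P + P(A + bω') + (A + bω')'P is negative semidefinite. -/
open Matrix

/-!
The feedback is found by backstepping. With `c = μ / 2`, let `p₀ = 1`, `p₁ = X + c` and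
`pₖ₊₁ = (X + c) pₖ + pₖ₋₁`; each `pₖ` is monic of degree `k`. Reading `X` as differentiation
along the chain, `zₖ = ∑ⱼ (coeff pₖ j) xⱼ` is a unitriangular change of coordinates `z = T x`.
Choosing `ω` so that the closed loop has characteristic polynomial `pₙ` amounts to replacing
`zₙ` by zero, and the closed loop becomes `żₖ = -c zₖ + zₖ₊₁ - zₖ₋₁`: a skew-symmetric system
shifted by `-c`. Hence `P = Tᵀ T` satisfies the Lyapunov relation with equality: the cross terms
telescope (`sum_skew`) and `μ - 2 * c = 0`.
-/

/-- The backstepping polynomials with index shifted by one: `backPoly c (k + 1)` is monic of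
degree `k`, and `backPoly c 0 = 0` supplies the missing left neighbour of the first one. -/
noncomputable def backPoly (c : ℝ) : ℕ → Polynomial ℝ
  | 0 => 0
  | 1 => 1
  | k + 2 => (Polynomial.X + Polynomial.C c) * backPoly c (k + 1) + backPoly c k

/-- Monicity and the degree bound, stated on coefficients for two consecutive indices so that
the two-step recursion can be followed. -/
lemma backPoly_coeff (c : ℝ) (k : ℕ) :
    ((∀ j, k ≤ j → (backPoly c k).coeff j = 0)) ∧
    (backPoly c (k + 1)).coeff k = 1 ∧ (∀ j, k < j → (backPoly c (k + 1)).coeff j = 0) := by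
  induction k with
  | zero =>
    refine ⟨fun j _ => by simp [backPoly], by simp [backPoly], fun j hj => ?_⟩
    simp [backPoly, Polynomial.coeff_one, hj.ne']
  | succ k ih =>
    obtain ⟨h0, h1, h2⟩ := ih
    refine ⟨fun j hj => h2 j hj, ?_, fun j hj => ?_⟩
    · rw [backPoly, Polynomial.coeff_add, add_mul, Polynomial.coeff_add, Polynomial.coeff_X_mul,
        Polynomial.coeff_C_mul, h1, h2 _ (Nat.lt_succ_self k), h0 _ (Nat.le_succ k)]
      simp
    · obtain ⟨i, rfl⟩ : ∃ i, j = i + 1 := ⟨j - 1, by omega⟩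
      rw [backPoly, Polynomial.coeff_add, add_mul, Polynomial.coeff_add, Polynomial.coeff_X_mul,
        Polynomial.coeff_C_mul, h2 i (by omega), h2 (i + 1) (by omega), h0 _ (by omega)]
      simp

/-- The functional `p ↦ ∑ⱼ (coeff p j) xⱼ`, which discards the coefficients of `p` of index
`n` and above. -/
noncomputable def coeffPair {n : ℕ} (x : Fin n → ℝ) (p : Polynomial ℝ) : ℝ :=
  ∑ j : Fin n, p.coeff j * x j

lemma coeffPair_backPoly {n : ℕ} (x : Fin n → ℝ) (c : ℝ) (k : ℕ) :
    coeffPair x (backPoly c (k + 2)) =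
      coeffPair x (Polynomial.X * backPoly c (k + 1)) + c * coeffPair x (backPoly c (k + 1)) +
        coeffPair x (backPoly c k) := by
  simp only [coeffPair, Finset.mul_sum, ← Finset.sum_add_distrib]
  refine Finset.sum_congr rfl fun j _ => ?_
  rw [backPoly, Polynomial.coeff_add, add_mul (Polynomial.X : Polynomial ℝ),
    Polynomial.coeff_add, Polynomial.coeff_C_mul]
  ring

/-- Differentiation along the chain is multiplication by `X`, up to the input, which enters
through the top coefficient. -/
lemma coeffPair_shift {m : ℕ} (x y : Fin (m + 1) → ℝ) (u : ℝ)
    (hy : ∀ j : Fin m, y j.castSucc = x j.succ) (hu : y (Fin.last m) = u)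
    (p : Polynomial ℝ) :
    coeffPair y p = coeffPair x (Polynomial.X * p) + p.coeff m * u := by
  unfold coeffPair
  rw [Fin.sum_univ_castSucc, Fin.sum_univ_succ]
  simp [hy, hu, Polynomial.coeff_X_mul]

/-- The off-diagonal part of the closed loop is skew, so it contributes nothing to the inner product of `z` and `ż`. -/
lemma sum_skew (m : ℕ) (z : ℕ → ℝ) (h0 : z 0 = 0) :
    ∑ k : Fin (m + 1), z (k + 1) * (z (k + 2) - (if (k : ℕ) = m then z (m + 2) else 0) - z k)
      = 0 := by
  have h : ∀ m : ℕ, ∑ k ∈ Finset.range m, z (k + 1) * (z (k + 2) - z k) = z m * z (m + 1) := by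
    intro m
    induction m with
    | zero => simp [h0]
    | succ m ih => rw [Finset.sum_range_succ, ih]; ring
  rw [Fin.sum_univ_castSucc]
  have h1 : ∀ k : Fin m, (k : ℕ) ≠ m := fun k => k.isLt.ne
  simp only [Fin.val_castSucc, h1, if_false, Fin.val_last, if_true, sub_zero]
  rw [Fin.sum_univ_eq_sum_range (fun k => z (k + 1) * (z (k + 2) - z k)) m, h]
  ring

/-- The coordinate change `z = T x`; row `k` lists the coefficients of the polynomial of
degree `k`. -/
noncomputable def backMatrix (n : ℕ) (c : ℝ) : Matrix (Fin n) (Fin n) ℝ :=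
  Matrix.of fun k j => (backPoly c (k + 1)).coeff j

lemma backMatrix_mulVec (n : ℕ) (c : ℝ) (x : Fin n → ℝ) (k : Fin n) :
    (backMatrix n c *ᵥ x) k = coeffPair x (backPoly c (k + 1)) := rfl

lemma backMatrix_det (n : ℕ) (c : ℝ) : (backMatrix n c).det = 1 := by
  rw [Matrix.det_of_isLowerTriangular]
  · exact Finset.prod_eq_one fun k _ => (backPoly_coeff c k).2.1
  · intro i j hij
    exact (backPoly_coeff c i).2.2 j (by simpa using hij)

lemma backMatrix_posDef (n : ℕ) (c : ℝ) :
    ((backMatrix n c)ᵀ * backMatrix n c).PosDef := by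
  have h := Matrix.PosDef.conjTranspose_mul_self (backMatrix n c)
    (Matrix.mulVec_injective_iff_isUnit.2
      ((Matrix.isUnit_iff_isUnit_det _).2 (by rw [backMatrix_det]; exact isUnit_one)))
  rwa [Matrix.conjTranspose_eq_transpose_of_trivial] at h

lemma lyapunov_form {n : ℕ} (μ : ℝ) (T F : Matrix (Fin n) (Fin n) ℝ) (x : Fin n → ℝ) :
    x ⬝ᵥ ((μ • (Tᵀ * T) + (Tᵀ * T) * F + Fᵀ * (Tᵀ * T)) *ᵥ x) =
      μ * ((T *ᵥ x) ⬝ᵥ (T *ᵥ x)) + 2 * ((T *ᵥ x) ⬝ᵥ (T *ᵥ (F *ᵥ x))) := by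
  have e : ∀ (M : Matrix (Fin n) (Fin n) ℝ) (u v : Fin n → ℝ),
      u ⬝ᵥ (Mᵀ *ᵥ v) = (M *ᵥ u) ⬝ᵥ v := fun M u v => by
    rw [Matrix.dotProduct_mulVec, Matrix.vecMul_transpose]
  simp only [Matrix.add_mulVec, Matrix.smul_mulVec, dotProduct_add, dotProduct_smul,
    ← Matrix.mulVec_mulVec, e, smul_eq_mul]
  rw [dotProduct_comm (T *ᵥ (F *ᵥ x))]
  ring

/-- for the chain-of-integrators pair `(A, b)` and every `μ > 0` there are a
feedback vector `ω` and a symmetric positive definite `P` with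
`P(A + bω') + (A + bω')'P ≤ −μP` (i.e. `μP + P(A + bω') + (A + bω')'P` is
negative semidefinite). -/
theorem lyapunov_chain_of_integrators (n : ℕ) (hn : 1 ≤ n) (μ : ℝ) (hμ : 0 < μ) :
    ∃ (ω : Fin n → ℝ) (P : Matrix (Fin n) (Fin n) ℝ),
      P.PosDef ∧
      (∀ x : Fin n → ℝ,
        x ⬝ᵥ ((μ • P +
            P * ((Matrix.of fun i j : Fin n => if (j : ℕ) = (i : ℕ) + 1 then (1:ℝ) else 0) +
              Matrix.vecMulVec (fun i : Fin n => if (i : ℕ) = n - 1 then (1:ℝ) else 0) ω) +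
            ((Matrix.of fun i j : Fin n => if (j : ℕ) = (i : ℕ) + 1 then (1:ℝ) else 0) +
              Matrix.vecMulVec (fun i : Fin n => if (i : ℕ) = n - 1 then (1:ℝ) else 0) ω)ᵀ *
              P).mulVec x) ≤ 0) := by
  obtain ⟨m, rfl⟩ : ∃ m, n = m + 1 := ⟨n - 1, by omega⟩
  obtain ⟨c, rfl⟩ : ∃ c, μ = 2 * c := ⟨μ / 2, by ring⟩
  refine ⟨fun j => -(backPoly c (m + 2)).coeff j,
    (backMatrix (m + 1) c)ᵀ * backMatrix (m + 1) c, backMatrix_posDef _ _,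
    fun x => le_of_eq ?_⟩
  rw [lyapunov_form]
  set F : Matrix (Fin (m + 1)) (Fin (m + 1)) ℝ :=
    (Matrix.of fun i j : Fin (m + 1) => if (j : ℕ) = (i : ℕ) + 1 then (1:ℝ) else 0) +
      Matrix.vecMulVec (fun i : Fin (m + 1) => if (i : ℕ) = m + 1 - 1 then (1:ℝ) else 0)
        (fun j : Fin (m + 1) => -(backPoly c (m + 2)).coeff j) with hF
  have hω : (fun j : Fin (m + 1) => -(backPoly c (m + 2)).coeff j) ⬝ᵥ x
      = -coeffPair x (backPoly c (m + 2)) := by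
    simp [dotProduct, coeffPair]
  have hFx : ∀ i, (F *ᵥ x) i = (∑ j : Fin (m + 1), if (j : ℕ) = (i : ℕ) + 1 then x j else 0) +
      if (i : ℕ) = m then -coeffPair x (backPoly c (m + 2)) else 0 := by
    intro i
    rw [hF, Matrix.add_mulVec, Pi.add_apply, Matrix.vecMulVec_mulVec, hω]
    simp [Matrix.mulVec, dotProduct]
  have hcast : ∀ j : Fin m, (F *ᵥ x) j.castSucc = x j.succ := by
    intro j
    rw [hFx, Finset.sum_eq_single j.succ]
    · simp [j.isLt.ne]
    · intro b _ hb
      rw [if_neg]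
      intro h
      exact hb (Fin.ext (by simpa using h))
    · simp
  have hlast : (F *ᵥ x) (Fin.last m) = -coeffPair x (backPoly c (m + 2)) := by
    rw [hFx, Finset.sum_eq_zero]
    · simp
    · intro b _
      rw [if_neg]
      have := b.isLt
      simp only [Fin.val_last]
      omega
  set z : ℕ → ℝ := fun k => coeffPair x (backPoly c k) with hz
  -- The closed loop in the new coordinates.
  have hdyn : ∀ k : Fin (m + 1), coeffPair (F *ᵥ x) (backPoly c (k + 1)) =
      -c * z (k + 1) + (z (k + 2) - (if (k : ℕ) = m then z (m + 2) else 0) - z k) := by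
    intro k
    rw [coeffPair_shift x _ _ hcast hlast]
    have h := coeffPair_backPoly x c k
    simp only [hz]
    split_ifs with hk
    · rw [hk] at h ⊢
      rw [(backPoly_coeff c m).2.1]
      linarith
    · rw [(backPoly_coeff c k).2.2 m (by have := k.isLt; omega)]
      linarith
  have hskew := sum_skew m z (by simp [hz, coeffPair, backPoly])
  simp only [dotProduct, backMatrix_mulVec, hdyn]
  calc _ = 2 * ∑ k : Fin (m + 1),
        z (k + 1) * (z (k + 2) - (if (k : ℕ) = m then z (m + 2) else 0) - z k) := by
        simp only [Finset.mul_sum, ← Finset.sum_add_distrib]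
        refine Finset.sum_congr rfl fun k _ => ?_
        simp only [hz]
        ring
    _ = 0 := by rw [hskew, mul_zero]
end

section
/- (Base step in the proof of Theorem 3.) Let n ≥ 1, a, b, c, Γ, ε > 0 and let κ, λ be smooth class-K∞ functions. Let h₁ : ℝ → ℝ, φ₁ : ℝ → ℝᵖ, α₁ : ℝ → ℝˡ be smooth with h₁(0) = 0, φ₁(0) = 0, let r : ℝ → (0,∞) be a smooth function with |h₁(x₁)| + |φ₁(x₁)| ≤ r(x₁)|x₁| for all x₁ ∈ ℝ, let η₁ : ℝ → (0,∞) be smooth, and let g₁ : ℝ × Θ → ℝ be smooth with g₁(x₁,θ) ≥ η₁(x₁) for all x₁ ∈ ℝ and θ ∈ Θ. Define M(x₁,z) = (b + 1 + λ(e^z)) r(x₁) + ((1 + κ(e^z))/(2^{3−n} a))(|α₁(x₁)|² + r²(x₁) x₁²) + 2^{n−2} c, V₁(x₁,z) = ½ x₁², and k₁(x₁,z) = −(M(x₁,z)/η₁(x₁)) x₁. Then for all (x₁,z) ∈ ℝ × ℝ, d ∈ ℝˡ, θ ∈ Θ: (∂V₁/∂x₁)(x₁,z)(h₁(x₁) +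 g₁(x₁,θ) k₁(x₁,z) + φ'₁(x₁)θ + α'₁(x₁)d) + (∂V₁/∂z)(x₁,z) Γ e^{-z}(V₁(x₁,z) − ε²/2)⁺ ≤ −2^{n−1} c V₁(x₁,z) + 2^{1−n} a (|d|² + ((|θ| − b − λ(e^z))⁺)²)/(1 + κ(e^z)). -/
/-!
Since `∂V₁/∂z = 0`, the claim only concerns `x₁` times the first component of the vector field.
The feedback term contributes at most `-M x₁²`, because `g₁ / η₁ ≥ 1` and `M ≥ 0`. With
`P = (|θ| - b - λ)⁺` one has `|θ| ≤ b + λ + P`, so the `h₁` and `φ₁` terms are bounded by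
`(b + 1 + λ) r x₁² + r x₁² P`. Writing `A = 2^{1-n} a` and `K = 1 + κ`, Young's inequality
`u v ≤ (K / (4A)) u² + A v² / K` absorbs `r x₁² P` and `|x₁| |α₁| |d|`; what remains is
`-2^{n-2} c x₁² = -2^{n-1} c V₁`. The real inequality is `dissipation_aux`.
-/

open Set Filter
open scoped RealInnerProductSpace

noncomputable section

theorem young_aux {A K : ℝ} (hA : 0 < A) (hK : 0 < K) (u v : ℝ) :
    u * v ≤ K / (4 * A) * u ^ 2 + A * v ^ 2 / K := by
  have h : K / (4 * A) * u ^ 2 + A * v ^ 2 / K - u * v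
      = (K * u - 2 * A * v) ^ 2 / (4 * A * K) := by
    field_simp
    ring
  have h2 : 0 ≤ (K * u - 2 * A * v) ^ 2 / (4 * A * K) := by positivity
  linarith

/-- The dissipation inequality after replacing vectors by their norms: `F`, `N`, `D`, `T` stand for
`|φ₁|`, `|α₁|`, `|d|`, `|θ|`, `s`, `t` for the inner products `⟪φ₁, θ⟫`, `⟪α₁, d⟫`, and
`L = b + λ`, `K = 1 + κ`, `A = 2^{1-n} a`, `C = 2^{n-2} c`. -/
theorem dissipation_aux {x h g η r L K A C F N D T s t : ℝ} (hA : 0 < A) (hK : 0 < K)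
    (hL : 0 ≤ L) (hC : 0 ≤ C) (hr : 0 < r) (hη : 0 < η) (hg : η ≤ g) (hF : 0 ≤ F)
    (hb : |h| + F ≤ r * |x|) (hs : |s| ≤ F * T) (ht : |t| ≤ N * D) :
    x * (h + g * (-(((L + 1) * r + K / (4 * A) * (N ^ 2 + r ^ 2 * x ^ 2) + C) / η) * x) + s + t)
      ≤ -(C * x ^ 2) + A * (D ^ 2 + (max (T - L) 0) ^ 2) / K := by
  set P := max (T - L) 0 with hP
  have hP0 : 0 ≤ P := le_max_right _ _
  have hTP : T ≤ L + P := by linarith [le_max_left (T - L) 0]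
  set M := (L + 1) * r + K / (4 * A) * (N ^ 2 + r ^ 2 * x ^ 2) + C with hM
  have hM0 : 0 ≤ M := by positivity
  have hfb : x * (g * (-(M / η) * x)) ≤ -(M * x ^ 2) := by
    have h1 : 1 ≤ g / η := (one_le_div hη).2 hg
    have h2 : x * (g * (-(M / η) * x)) = -(g / η * (M * x ^ 2)) := by ring
    rw [h2]
    have : 0 ≤ M * x ^ 2 := by positivity
    nlinarith
  have hx : |x| ^ 2 = x ^ 2 := sq_abs x
  have hx0 := abs_nonneg x
  have hh0 := abs_nonneg h
  have hxh : x * h ≤ |x| * |h| := by rw [← abs_mul]; exact le_abs_self _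
  have hxs : x * s ≤ |x| * (F * (L + P)) := by
    refine (le_abs_self _).trans ?_
    rw [abs_mul]
    exact mul_le_mul_of_nonneg_left (hs.trans (mul_le_mul_of_nonneg_left hTP hF)) hx0
  have hxt : x * t ≤ (|x| * N) * D := by
    refine (le_abs_self _).trans ?_
    rw [abs_mul, mul_assoc]
    exact mul_le_mul_of_nonneg_left ht hx0
  have hdrift : |x| * |h| + |x| * (F * (L + P)) ≤ (L + 1) * r * x ^ 2 + (r * x ^ 2) * P := by
    have h1 : |h| + F * (L + P) ≤ (|h| + F) * (L + 1 + P) := by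
      nlinarith [mul_nonneg hh0 hL, mul_nonneg hh0 hP0]
    have h2 : (|h| + F) * (L + 1 + P) ≤ r * |x| * (L + 1 + P) :=
      mul_le_mul_of_nonneg_right hb (by linarith)
    calc |x| * |h| + |x| * (F * (L + P)) = |x| * (|h| + F * (L + P)) := by ring
      _ ≤ |x| * (r * |x| * (L + 1 + P)) := mul_le_mul_of_nonneg_left (h1.trans h2) hx0
      _ = (L + 1) * r * |x| ^ 2 + (r * |x| ^ 2) * P := by ring
      _ = _ := by rw [hx]
  have y1 := young_aux hA hK (r * x ^ 2) P
  have y2 := young_aux hA hK (|x| * N) D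
  rw [mul_pow, hx] at y2
  have e1 : x * (h + g * (-(M / η) * x) + s + t)
      = x * h + x * (g * (-(M / η) * x)) + x * s + x * t := by ring
  have e2 : M * x ^ 2 = (L + 1) * r * x ^ 2 + K / (4 * A) * (r * x ^ 2) ^ 2
      + K / (4 * A) * (x ^ 2 * N ^ 2) + C * x ^ 2 := by rw [hM]; ring
  have e3 : A * (D ^ 2 + P ^ 2) / K = A * D ^ 2 / K + A * P ^ 2 / K := by ring
  rw [e1, e3]
  linarith

/-- base step in the proof of Theorem 3: with
`M(x₁,z) = (b+1+λ(e^z))r(x₁) + ((1+κ(e^z))/(2^{3−n}a))(|α₁(x₁)|² + r²(x₁)x₁²) + 2^{n−2}c`,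
`V₁(x₁,z) = ½x₁²` and `k₁(x₁,z) = −(M(x₁,z)/η₁(x₁))x₁`, the claimed dissipation
inequality holds. -/
theorem DADS_base_step_no_integrators (n p l : ℕ) (hn : 1 ≤ n)
    (Θ : Set (EuclideanSpace ℝ (Fin p))) (hΘ : Θ.Nonempty)
    (a b c Γ ε : ℝ) (ha : 0 < a) (hb : 0 < b) (hc : 0 < c) (hΓ : 0 < Γ) (hε : 0 < ε)
    (κ lam : ℝ → ℝ)
    (hκ : ClassKInf κ) (hκs : ContDiffOn ℝ (⊤ : ℕ∞) κ (Ici 0))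
    (hlam : ClassKInf lam) (hlams : ContDiffOn ℝ (⊤ : ℕ∞) lam (Ici 0))
    (h₁ : ℝ → ℝ) (φ₁ : ℝ → EuclideanSpace ℝ (Fin p)) (α₁ : ℝ → EuclideanSpace ℝ (Fin l))
    (hh₁ : ContDiff ℝ (⊤ : ℕ∞) h₁) (hφ₁ : ContDiff ℝ (⊤ : ℕ∞) φ₁) (hα₁ : ContDiff ℝ (⊤ : ℕ∞) α₁)
    (hh₁0 : h₁ 0 = 0) (hφ₁0 : φ₁ 0 = 0)
    (r : ℝ → ℝ) (hr : ContDiff ℝ (⊤ : ℕ∞) r) (hrpos : ∀ x₁, 0 < r x₁)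
    (hrb : ∀ x₁ : ℝ, |h₁ x₁| + ‖φ₁ x₁‖ ≤ r x₁ * |x₁|)
    (η₁ : ℝ → ℝ) (hη₁ : ContDiff ℝ (⊤ : ℕ∞) η₁) (hη₁pos : ∀ x₁, 0 < η₁ x₁)
    (g₁ : ℝ → EuclideanSpace ℝ (Fin p) → ℝ)
    (hg₁ : ∀ θ ∈ Θ, ContDiff ℝ (⊤ : ℕ∞) (fun x₁ => g₁ x₁ θ))
    (hg₁lb : ∀ (x₁ : ℝ) (θ : EuclideanSpace ℝ (Fin p)), θ ∈ Θ → η₁ x₁ ≤ g₁ x₁ θ) :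
    ∀ (x₁ z : ℝ) (θ : EuclideanSpace ℝ (Fin p)) (d : EuclideanSpace ℝ (Fin l)), θ ∈ Θ →
      fderiv ℝ (fun q : ℝ × ℝ => (1/2) * q.1^2) (x₁, z)
          (h₁ x₁ + g₁ x₁ θ *
              (-(((b + 1 + lam (Real.exp z)) * r x₁ +
                  (1 + κ (Real.exp z)) / ((2:ℝ)^((3:ℤ) - n) * a) *
                    (‖α₁ x₁‖^2 + (r x₁)^2 * x₁^2) +
                  (2:ℝ)^((n:ℤ) - 2) * c) / η₁ x₁) * x₁) +
            ⟪φ₁ x₁, θ⟫ + ⟪α₁ x₁, d⟫,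
            Γ * Real.exp (-z) * max ((1/2) * x₁^2 - ε^2/2) 0)
        ≤ -((2:ℝ)^((n:ℤ) - 1) * c) * ((1/2) * x₁^2) +
          (2:ℝ)^((1:ℤ) - n) * a *
            (‖d‖^2 + (max (‖θ‖ - b - lam (Real.exp z)) 0)^2) / (1 + κ (Real.exp z)) := by
  intro x₁ z θ d hθ
  have hexp : (0 : ℝ) < Real.exp z := Real.exp_pos z
  have pos_of : ∀ f : ℝ → ℝ, ClassKInf f → 0 < f (Real.exp z) := fun f hf => by
    have := hf.2.1 (mem_Ici.2 le_rfl) (mem_Ici.2 hexp.le) hexp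
    rwa [hf.2.2.1] at this
  have hκ0 := pos_of κ hκ
  have hl0 := pos_of lam hlam
  have hfd : ∀ u v : ℝ, fderiv ℝ (fun q : ℝ × ℝ => (1/2) * q.1^2) (x₁, z) (u, v) = x₁ * u := by
    intro u v
    have h := ((hasFDerivAt_fst (𝕜 := ℝ) (p := (x₁, z))).pow 2).const_mul (1/2 : ℝ)
    rw [h.fderiv]
    simp
    ring
  rw [hfd]
  have p1 : (2:ℝ)^((3:ℤ) - n) * a = 4 * ((2:ℝ)^((1:ℤ) - n) * a) := by
    rw [show (3:ℤ) - n = 2 + (1 - n) by ring, zpow_add₀ two_ne_zero]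
    norm_num
    ring
  have p2 : (2:ℝ)^((n:ℤ) - 1) = 2 * (2:ℝ)^((n:ℤ) - 2) := by
    rw [show (n:ℤ) - 1 = 1 + (n - 2) by ring, zpow_add₀ two_ne_zero, zpow_one]
  have key := dissipation_aux (x := x₁) (h := h₁ x₁) (L := b + lam (Real.exp z))
    (K := 1 + κ (Real.exp z)) (A := (2:ℝ)^((1:ℤ) - n) * a) (C := (2:ℝ)^((n:ℤ) - 2) * c)
    (by positivity) (by positivity) (by positivity) (by positivity) (hrpos x₁) (hη₁pos x₁)
    (hg₁lb x₁ θ hθ) (norm_nonneg _) (hrb x₁) (abs_real_inner_le_norm (φ₁ x₁) θ)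
    (abs_real_inner_le_norm (α₁ x₁) d)
  rw [p1, p2, show b + 1 + lam (Real.exp z) = b + lam (Real.exp z) + 1 by ring, sub_sub]
  refine key.trans (le_of_eq ?_)
  ring
end
end

section
/- (Lyapunov inequality for the DADS controller of the wing-rock example.) Consider the system ẋ₁ = x₂, ẋ₂ = θ₁x₁ + θ₂x₂ + θ₃x₁x₂ + θ₄x₂² + x₃ + d₁, ẋ₃ = u + d₂ with x = (x₁,x₂,x₃) ∈ ℝ³, θ = (θ₁,θ₂,θ₃,θ₄) ∈ ℝ⁴, d = (d₁,d₂) ∈ ℝ². For constants Γ > 0, c ≥ 1/2, K ≥ 28c, ε > 0, define ζ = x₂ + 2cx₁, ρ = 1 + e^z, L(x) = 1 + x₁⁴ + x₂⁴, ξ = x₃ + x₁ + 2cx₂ + Kρ²L(x)ζ, V(x,z) = ½x₁² + ½ζ² + ½ξ², and the feedback u = −(2c + Kρ²(L(x) + 4ζx₂³))x₃ − ζ − x₂ − 2ΓKρL(x)(V(x,z) − ε)⁺ζ − Kρ²x₂(4x₁³ζ + 2cL(x)) − 42c(2c+1)ρ²L(x)(1 + 18cKρ²L(x))²ξ. Then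 for all (x,z) ∈ ℝ³ × ℝ, θ ∈ ℝ⁴, d ∈ ℝ², the derivative of V along the closed loop with update law ż = Γe^{-z}(V(x,z) − ε)⁺, i.e. the quantity (∂V/∂x₁)x₂ + (∂V/∂x₂)(θ₁x₁ + θ₂x₂ + θ₃x₁x₂ + θ₄x₂² + x₃ + d₁) + (∂V/∂x₃)(u + d₂) + (∂V/∂z)Γe^{-z}(V(x,z) − ε)⁺, is at most −cV(x,z) + 2(|d|² + ((|θ| − 1 − e^z)⁺)²)/(1 + e^z). -/
/-!
Write `φ = θ₁x₁ + θ₂x₂ + θ₃x₁x₂ + θ₄x₂²`, `A = 2c + Kρ²(L + 4ζx₂³)`, `B = 1 + 18cKρ²L` and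
`G = 42c(2c+1)ρ²LB²`.  The feedback cancels every known term, and the derivative of `V` along the
closed loop is

  `-2c x₁² - Kρ²L ζ² - G ξ² + (ζ + ξA)(φ + d₁) + ξ d₂`.

The rest is a matter of Young inequalities.  Put `P = x₁² + x₂² + x₁²x₂² + x₂⁴` and
`m = (|θ| - ρ)⁺`, so that `|φ| ≤ (ρ + m)√P` by Cauchy–Schwarz.  The part of `φ` carrying `m` and the
disturbances are paid for by `2(|d|² + m²)/ρ`, using `P ≤ 2L` (`regressor_le`); the part carrying
`ρ` is paid for by the negative terms, using `P ≤ L(15c²x₁² + (5/2)ζ²)`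
(`regressor_le_state`).  The bound `|A| ≤ B` (`abs_gain_le`) makes the gain `G` dominate all terms
in `ξ²`.
-/


noncomputable section

/-- The Lyapunov function `V(x,z) = ½x₁² + ½ζ² + ½ξ²` of the wing-rock example, with
`ζ = x₂ + 2cx₁`, `ρ = 1 + e^z`, `L = 1 + x₁⁴ + x₂⁴`, `ξ = x₃ + x₁ + 2cx₂ + Kρ²Lζ`. -/
def Vwing (c K : ℝ) (q : ℝ × ℝ × ℝ × ℝ) : ℝ :=
  (1/2) * q.1^2 + (1/2) * (q.2.1 + 2*c*q.1)^2 +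
    (1/2) * (q.2.2.1 + q.1 + 2*c*q.2.1 +
      K * (1 + Real.exp q.2.2.2)^2 * (1 + q.1^4 + q.2.1^4) * (q.2.1 + 2*c*q.1))^2

/-- The differential of `Vwing`, applied to a direction `(v₁, v₂, v₃, v₄)`. -/
lemma fderiv_Vwing_apply (c K x₁ x₂ x₃ z v₁ v₂ v₃ v₄ : ℝ) :
    fderiv ℝ (Vwing c K) (x₁, x₂, x₃, z) (v₁, v₂, v₃, v₄) =
      x₁ * v₁ + (x₂ + 2*c*x₁) * (v₂ + 2*c*v₁) +
      (x₃ + x₁ + 2*c*x₂ + K * (1 + Real.exp z)^2 * (1 + x₁^4 + x₂^4) * (x₂ + 2*c*x₁)) *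
        (v₃ + v₁ + 2*c*v₂ +
          K * (2 * (1 + Real.exp z) * (Real.exp z * v₄)) * (1 + x₁^4 + x₂^4) * (x₂ + 2*c*x₁) +
          K * (1 + Real.exp z)^2 * (4*x₁^3*v₁ + 4*x₂^3*v₂) * (x₂ + 2*c*x₁) +
          K * (1 + Real.exp z)^2 * (1 + x₁^4 + x₂^4) * (v₂ + 2*c*v₁)) := by
  have hd : DifferentiableAt ℝ (Vwing c K) (x₁, x₂, x₃, z) := by
    unfold Vwing
    fun_prop
  -- The directional derivative is computed along the line `t ↦ (x, z) + t v`.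
  have line : ∀ a v : ℝ, HasDerivAt (fun t : ℝ => a + t * v) v 0 := fun a v => by
    simpa using ((hasDerivAt_id (0 : ℝ)).mul_const v).const_add a
  have h₁ := line x₁ v₁
  have h₂ := line x₂ v₂
  have h₃ := line x₃ v₃
  have h₄ := line z v₄
  have hcurve := h₁.prodMk (h₂.prodMk (h₃.prodMk h₄))
  have hd' : HasFDerivAt (Vwing c K) (fderiv ℝ (Vwing c K) (x₁, x₂, x₃, z))
      (x₁ + 0 * v₁, x₂ + 0 * v₂, x₃ + 0 * v₃, z + 0 * v₄) := by
    simpa using hd.hasFDerivAt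
  have hchain := hd'.comp_hasDerivAt (0 : ℝ) hcurve
  have hζ := h₂.add (h₁.const_mul (2*c))
  have hρ := ((h₄.exp).const_add 1).pow 2
  have hL := ((h₁.pow 4).const_add 1).add (h₂.pow 4)
  have hξ := ((h₃.add h₁).add (h₂.const_mul (2*c))).add (((hρ.const_mul K).mul hL).mul hζ)
  have hV := (((h₁.pow 2).const_mul (1/2)).add ((hζ.pow 2).const_mul (1/2))).add
    ((hξ.pow 2).const_mul (1/2))
  refine (hchain.unique hV).trans ?_
  simp
  ring

/-- The feedback cancels all known terms: `W` stands for `(V - ε)⁺`, and `z'` enters through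
`e^z z' = Γ W`. -/
lemma closed_loop_identity {Γ c K ρ L W x₁ x₂ x₃ ζ ξ θ₁ θ₂ θ₃ θ₄ d₁ d₂ B : ℝ}
    (hζ : ζ = x₂ + 2*c*x₁) (hξ : ξ = x₃ + x₁ + 2*c*x₂ + K*ρ^2*L*ζ) :
    x₁ * x₂ + ζ * ((θ₁*x₁ + θ₂*x₂ + θ₃*x₁*x₂ + θ₄*x₂^2 + x₃ + d₁) + 2*c*x₂) +
      ξ * (((-(2*c + K*ρ^2*(L + 4*ζ*x₂^3))*x₃ - ζ - x₂ - 2*Γ*K*ρ*L*W*ζ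
          - K*ρ^2*x₂*(4*x₁^3*ζ + 2*c*L) - 42*c*(2*c+1)*ρ^2*L*B^2*ξ) + d₂) + x₂ +
        2*c*(θ₁*x₁ + θ₂*x₂ + θ₃*x₁*x₂ + θ₄*x₂^2 + x₃ + d₁) +
        K * (2 * ρ * (Γ * W)) * L * ζ +
        K * ρ^2 * (4*x₁^3*x₂ + 4*x₂^3*(θ₁*x₁ + θ₂*x₂ + θ₃*x₁*x₂ + θ₄*x₂^2 + x₃ + d₁)) * ζ +
        K * ρ^2 * L * ((θ₁*x₁ + θ₂*x₂ + θ₃*x₁*x₂ + θ₄*x₂^2 + x₃ + d₁) + 2*c*x₂)) =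
    -2*c*x₁^2 - K*ρ^2*L*ζ^2 + (ζ + ξ*(2*c + K*ρ^2*(L + 4*ζ*x₂^3))) *
      ((θ₁*x₁ + θ₂*x₂ + θ₃*(x₁*x₂) + θ₄*x₂^2) + d₁) + ξ*d₂ - 42*c*(2*c+1)*ρ^2*L*B^2*ξ^2 := by
  linear_combination (-ζ)*hξ - x₁*hζ

/-- The squared norm of the regressor `(x₁, x₂, x₁x₂, x₂²)` is at most `2L`. -/
lemma regressor_le (x₁ x₂ : ℝ) :
    x₁^2 + x₂^2 + (x₁*x₂)^2 + (x₂^2)^2 ≤ 2 * (1 + x₁^4 + x₂^4) := by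
  nlinarith [sq_nonneg (x₁^2 - 1), sq_nonneg (x₂^2 - 1), sq_nonneg (x₁^2 - x₂^2)]

/-- Since `x₂ = ζ - 2cx₁` and the squared norm of the regressor is `(x₁² + x₂²)(1 + x₂²)`, that
norm is controlled by `x₁` and `ζ` up to the factor `L`. -/
lemma regressor_le_state (c x₁ x₂ : ℝ) (hc : 1/2 ≤ c) :
    x₁^2 + x₂^2 + (x₁*x₂)^2 + (x₂^2)^2 ≤
      (1 + x₁^4 + x₂^4) * (15*c^2*x₁^2 + 5/2*(x₂ + 2*c*x₁)^2) := by
  have h1 : x₁^2 + x₂^2 ≤ 12*c^2*x₁^2 + 2*(x₂ + 2*c*x₁)^2 := by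
    have : 0 ≤ (4*c^2 - 1) * x₁^2 := mul_nonneg (by nlinarith) (sq_nonneg _)
    nlinarith [sq_nonneg (x₂ + 4*c*x₁)]
  have h2 : 1 + x₂^2 ≤ 5/4 * (1 + x₁^4 + x₂^4) := by
    nlinarith [sq_nonneg (x₂^2 - 2/5), sq_nonneg (x₁^2)]
  calc x₁^2 + x₂^2 + (x₁*x₂)^2 + (x₂^2)^2 = (1 + x₂^2) * (x₁^2 + x₂^2) := by ring
    _ ≤ (5/4 * (1 + x₁^4 + x₂^4)) * (12*c^2*x₁^2 + 2*(x₂ + 2*c*x₁)^2) :=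
        mul_le_mul h2 h1 (by positivity) (by positivity)
    _ = _ := by ring

/-- The coefficient of `x₂'` in the derivative of `ξ` is bounded by `18cKR L`, where `R = ρ²`. -/
lemma abs_gain_le (c K R x₁ x₂ : ℝ) (hc : 1/2 ≤ c) (hK : 28*c ≤ K) (hR : 1 ≤ R) :
    |2*c + K*R*((1 + x₁^4 + x₂^4) + 4*(x₂ + 2*c*x₁)*x₂^3)| ≤
      18*c*(K*R*(1 + x₁^4 + x₂^4)) := by
  have hKR : 1 ≤ K*R := by nlinarith
  -- Young: `|x₁x₂³| ≤ x₁⁴/4 + 3x₂⁴/4`.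
  have y1 : x₁*x₂^3 ≤ x₁^4/4 + 3*x₂^4/4 := by
    nlinarith [sq_nonneg (x₁^2 - x₂^2), sq_nonneg (x₁*x₂ - x₂^2), sq_nonneg (x₁ - x₂)]
  have y2 : -(x₁*x₂^3) ≤ x₁^4/4 + 3*x₂^4/4 := by
    nlinarith [sq_nonneg (x₁^2 - x₂^2), sq_nonneg (x₁*x₂ + x₂^2), sq_nonneg (x₁ + x₂)]
  have p1 : 0 ≤ x₁^4 := by positivity
  have p2 : 0 ≤ x₂^4 := by positivity
  have c1 := mul_le_mul_of_nonneg_left y1 (by linarith : 0 ≤ c)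
  have c2 := mul_le_mul_of_nonneg_left y2 (by linarith : 0 ≤ c)
  have q1 := mul_nonneg (by linarith : 0 ≤ 2*c - 1) p1
  have q2 := mul_nonneg (by linarith : 0 ≤ 2*c - 1) p2
  have q3 := mul_nonneg (by linarith : 0 ≤ c) p1
  have q4 := mul_nonneg (by linarith : 0 ≤ c) p2
  have u1 : (1 + x₁^4 + x₂^4) + 4*(x₂ + 2*c*x₁)*x₂^3 ≤ 16*c*(1 + x₁^4 + x₂^4) := by
    nlinarith
  have u2 : -(16*c*(1 + x₁^4 + x₂^4)) ≤ (1 + x₁^4 + x₂^4) + 4*(x₂ + 2*c*x₁)*x₂^3 := by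
    nlinarith
  have k0 : 0 ≤ K*R := by linarith
  have w1 := mul_le_mul_of_nonneg_left u1 k0
  have w2 := mul_le_mul_of_nonneg_left u2 k0
  have w3 : 1 ≤ K*R*(1 + x₁^4 + x₂^4) := one_le_mul_of_one_le_of_one_le hKR (by linarith)
  have w4 := mul_le_mul_of_nonneg_left w3 (by linarith : 0 ≤ 2*c)
  rw [abs_le]
  constructor <;> nlinarith

lemma young {a : ℝ} (ha : 0 < a) (u v : ℝ) : u * v ≤ v^2 / a + a * u^2 / 4 := by
  have h : v^2 / a + a * u^2 / 4 - u * v = (v - a*u/2)^2 / a := by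
    field_simp
    ring
  have : 0 ≤ (v - a*u/2)^2 / a := by positivity
  linarith

/-- Cauchy–Schwarz in `ℝ⁴`, with `|θ| ≤ ρ + (|θ| - ρ)⁺`. -/
lemma abs_inner_le (a₁ a₂ a₃ a₄ b₁ b₂ b₃ b₄ e : ℝ) :
    |a₁*b₁ + a₂*b₂ + a₃*b₃ + a₄*b₄| ≤
      ((1 + e) + max (√(a₁^2 + a₂^2 + a₃^2 + a₄^2) - 1 - e) 0) *
        √(b₁^2 + b₂^2 + b₃^2 + b₄^2) := by
  have h : |a₁*b₁ + a₂*b₂ + a₃*b₃ + a₄*b₄| ≤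
      √(a₁^2 + a₂^2 + a₃^2 + a₄^2) * √(b₁^2 + b₂^2 + b₃^2 + b₄^2) := by
    rw [← Real.sqrt_mul (by positivity)]
    apply Real.abs_le_sqrt
    nlinarith [sq_nonneg (a₁*b₂ - a₂*b₁), sq_nonneg (a₁*b₃ - a₃*b₁), sq_nonneg (a₁*b₄ - a₄*b₁),
      sq_nonneg (a₂*b₃ - a₃*b₂), sq_nonneg (a₂*b₄ - a₄*b₂), sq_nonneg (a₃*b₄ - a₄*b₃)]
  refine h.trans (mul_le_mul_of_nonneg_right ?_ (Real.sqrt_nonneg _))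
  linarith [le_max_left (√(a₁^2 + a₂^2 + a₃^2 + a₄^2) - 1 - e) 0]

/-- Bound for a cross term `w φ`: the `m`-part of `φ` is absorbed with `P ≤ 2L`, the `ρ`-part with
`P ≤ L Q`, where `s² = P`. -/
lemma cross_term_le {c ρ L m s φ Q : ℝ} (w : ℝ) (hc : 0 < c) (hρ : 0 < ρ) (hL : 0 < L)
    (hφ : |φ| ≤ (ρ + m) * s) (hs2 : s^2 ≤ 2*L) (hsQ : s^2 ≤ L*Q) :
    w * φ ≤ m^2/ρ + ρ*L*w^2/2 + 5*c*ρ^2*L*w^2 + Q/(20*c) := by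
  have h1 : w * φ ≤ |w| * ((ρ + m) * s) :=
    (le_abs_self _).trans (by rw [abs_mul]; exact mul_le_mul_of_nonneg_left hφ (abs_nonneg w))
  have h2 := young hρ (|w| * s) m
  have h3 := young (show 0 < 20*c*L by positivity) (|w| * ρ) s
  have h4 : s^2 / (20*c*L) ≤ Q/(20*c) := by
    rw [div_le_div_iff₀ (by positivity) (by positivity)]
    nlinarith [mul_le_mul_of_nonneg_left hsQ hc.le]
  have h5 : ρ * (|w| * s)^2 / 4 ≤ ρ*L*w^2/2 := by
    rw [mul_pow, sq_abs]
    nlinarith [mul_le_mul_of_nonneg_left hs2 (by positivity : 0 ≤ ρ*w^2)]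
  have h6 : 20*c*L * (|w| * ρ)^2 / 4 = 5*c*ρ^2*L*w^2 := by
    rw [mul_pow, sq_abs]
    ring
  linarith

/-- The scalar inequality left once the derivative of `V` has been simplified, with the gain `A`
and the uncertain term `φ` abstracted to the bounds they satisfy. -/
lemma lyapunov_estimate {c K ρ L A B m s φ x₁ ζ ξ d₁ d₂ : ℝ} (hc : 1/2 ≤ c) (hK : 28*c ≤ K)
    (hρ : 1 ≤ ρ) (hL : 1 ≤ L) (hB : 1 ≤ B) (hA : |A| ≤ B)
    (hφ : |φ| ≤ (ρ + m) * s) (hs2 : s^2 ≤ 2*L)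
    (hsQ : s^2 ≤ L*(15*c^2*x₁^2 + 5/2*ζ^2)) :
    -2*c*x₁^2 - K*ρ^2*L*ζ^2 + (ζ + ξ*A)*(φ + d₁) + ξ*d₂ - 42*c*(2*c+1)*ρ^2*L*B^2*ξ^2 ≤
      -c*((1/2)*x₁^2 + (1/2)*ζ^2 + (1/2)*ξ^2) + 2*((d₁^2 + d₂^2) + m^2)/ρ := by
  have hc0 : 0 < c := by linarith
  have hρ0 : 0 < ρ := by linarith
  have hL0 : 0 < L := by linarith
  have t1 := cross_term_le ζ hc0 hρ0 hL0 hφ hs2 hsQ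
  have t2 := cross_term_le (ξ*A) hc0 hρ0 hL0 hφ hs2 hsQ
  have t3 := young hρ0 ζ d₁
  have t4 := young hρ0 (ξ*A) d₁
  have t5 := young hρ0 ξ d₂
  have hd2 : 0 ≤ d₂^2/ρ := by positivity
  have hQ : (15*c^2*x₁^2 + 5/2*ζ^2)/(20*c) ≤ 3/4*c*x₁^2 + ζ^2/4 := by
    rw [div_le_iff₀ (by positivity)]
    nlinarith [mul_nonneg (by linarith : 0 ≤ c - 1/2) (sq_nonneg ζ)]
  have hA2 : (ξ*A)^2 ≤ B^2*ξ^2 := by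
    rw [mul_pow, mul_comm]
    exact mul_le_mul_of_nonneg_right (sq_le_sq' (abs_le.mp hA).1 (abs_le.mp hA).2) (sq_nonneg ξ)
  have hB2 : ξ^2 ≤ B^2*ξ^2 := le_mul_of_one_le_left (sq_nonneg ξ) (one_le_pow₀ hB)
  -- All remaining coefficients are compared with `M = cρ²L`.
  set M := c*ρ^2*L with hM
  have e1 : ρ ≤ ρ^2 := by nlinarith
  have e2 : 1 ≤ ρ^2 := e1.trans' hρ
  have m1 : c ≤ M := by
    have := one_le_mul_of_one_le_of_one_le e2 hL
    rw [hM]; linarith [mul_le_mul_of_nonneg_left this hc0.le]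
  have m3 : ρ*L ≤ 2*M := by
    have := mul_le_mul_of_nonneg_right e1 hL0.le
    have h0 : 0 ≤ ρ^2*L := by positivity
    rw [hM]; linarith [mul_le_mul_of_nonneg_right hc h0]
  have m2 : ρ ≤ 2*M := m3.trans' (le_mul_of_one_le_right hρ0.le hL)
  have m4 : 28*M ≤ K*ρ^2*L := by
    have h0 : 0 ≤ ρ^2*L := by positivity
    rw [hM]; linarith [mul_le_mul_of_nonneg_right hK h0]
  have m5 : 84*M ≤ 42*c*(2*c+1)*ρ^2*L := by
    have h0 : 0 ≤ c*(ρ^2*L) := by positivity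
    rw [hM]; linarith [mul_nonneg h0 (by linarith : 0 ≤ 2*c - 1)]
  have hM0 : 0 ≤ M := by linarith
  set Y := B^2*ξ^2 with hY
  have hY0 : 0 ≤ Y := by positivity
  have z0 := sq_nonneg ζ
  have f1 := mul_le_mul_of_nonneg_right m4 z0
  have f2 := mul_le_mul_of_nonneg_right m3 z0
  have f3 := mul_le_mul_of_nonneg_right m2 z0
  have f4 := mul_le_mul_of_nonneg_right m1 z0
  have f5 := mul_le_mul_of_nonneg_right hc z0
  have g1 := mul_le_mul_of_nonneg_right m5 hY0
  have g2 := mul_le_mul m3 hA2 (sq_nonneg _) (by positivity)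
  have g3 := mul_le_mul m2 hA2 (sq_nonneg _) (by positivity)
  have g4 := mul_le_mul m2 hB2 (sq_nonneg _) (by positivity)
  have g5 := mul_le_mul m1 hB2 (sq_nonneg _) hM0
  have g6 := mul_le_mul_of_nonneg_left hA2 hM0
  have g7 := mul_nonneg hM0 hY0
  have g8 := mul_nonneg hM0 z0
  have r1 : 5*c*ρ^2*L*ζ^2 = 5*(M*ζ^2) := by rw [hM]; ring
  have r2 : 5*c*ρ^2*L*(ξ*A)^2 = 5*(M*(ξ*A)^2) := by rw [hM]; ring
  have r3 : 42*c*(2*c+1)*ρ^2*L*B^2*ξ^2 = 42*c*(2*c+1)*ρ^2*L*Y := by rw [hY]; ring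
  have r4 : 2*((d₁^2 + d₂^2) + m^2)/ρ = 2*(d₁^2/ρ) + 2*(d₂^2/ρ) + 2*(m^2/ρ) := by ring
  rw [r1] at t1
  rw [r2] at t2
  rw [r3, r4]
  linarith

/-- Lyapunov inequality for the DADS controller of the wing-rock example:
along the closed loop the derivative of `V` is at most
`−cV + 2(|d|² + ((|θ| − 1 − e^z)⁺)²)/(1 + e^z)`. -/
theorem wingrock_DADS_lyapunov (Γ c K ε : ℝ)
    (hΓ : 0 < Γ) (hc : 1/2 ≤ c) (hK : 28 * c ≤ K) (hε : 0 < ε)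
    (x₁ x₂ x₃ z θ₁ θ₂ θ₃ θ₄ d₁ d₂ : ℝ) :
    let ζ := x₂ + 2*c*x₁
    let ρ := 1 + Real.exp z
    let L := 1 + x₁^4 + x₂^4
    let ξ := x₃ + x₁ + 2*c*x₂ + K*ρ^2*L*ζ
    let V := Vwing c K (x₁, x₂, x₃, z)
    let u := -(2*c + K*ρ^2*(L + 4*ζ*x₂^3))*x₃ - ζ - x₂
      - 2*Γ*K*ρ*L*(max (V - ε) 0)*ζ
      - K*ρ^2*x₂*(4*x₁^3*ζ + 2*c*L)
      - 42*c*(2*c+1)*ρ^2*L*(1 + 18*c*K*ρ^2*L)^2*ξ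
    fderiv ℝ (Vwing c K) (x₁, x₂, x₃, z)
        (x₂, θ₁*x₁ + θ₂*x₂ + θ₃*x₁*x₂ + θ₄*x₂^2 + x₃ + d₁, u + d₂,
          Γ * Real.exp (-z) * max (V - ε) 0)
      ≤ -c * V + 2 * ((d₁^2 + d₂^2) +
          (max (Real.sqrt (θ₁^2 + θ₂^2 + θ₃^2 + θ₄^2) - 1 - Real.exp z) 0)^2) /
          (1 + Real.exp z) := by
  intro ζ ρ L ξ V u
  rw [fderiv_Vwing_apply]
  have he : Real.exp z * Real.exp (-z) = 1 := by rw [← Real.exp_add]; simp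
  have hρ : 1 ≤ ρ := by
    have := Real.exp_pos z
    change 1 ≤ 1 + Real.exp z
    linarith
  have hR : 1 ≤ ρ^2 := one_le_pow₀ hρ
  have hL : 1 ≤ L := by
    have : 0 ≤ x₁^4 + x₂^4 := by positivity
    change 1 ≤ 1 + x₁^4 + x₂^4
    linarith
  have hgain := abs_gain_le c K (ρ^2) x₁ x₂ hc hK hR
  have hφ := abs_inner_le θ₁ θ₂ θ₃ θ₄ x₁ x₂ (x₁*x₂) (x₂^2) (Real.exp z)
  have hs : √(x₁^2 + x₂^2 + (x₁*x₂)^2 + (x₂^2)^2)^2 = x₁^2 + x₂^2 + (x₁*x₂)^2 + (x₂^2)^2 :=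
    Real.sq_sqrt (by positivity)
  have hB : 1 ≤ 1 + 18*c*K*ρ^2*L := by
    have : 0 ≤ 18*c*K*ρ^2*L := by
      have : 0 ≤ c := by linarith
      have : 0 ≤ K := by linarith
      positivity
    linarith
  have key := lyapunov_estimate (ξ := ξ) (d₁ := d₁) (d₂ := d₂) (x₁ := x₁) (ζ := ζ)
    (A := 2*c + K*ρ^2*(L + 4*ζ*x₂^3)) hc hK hρ hL hB
    (hgain.trans (by change 18*c*(K*ρ^2*L) ≤ _; linarith)) hφ
    (hs.le.trans (regressor_le x₁ x₂)) (hs.le.trans (regressor_le_state c x₁ x₂ hc))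
  have hexp : Real.exp z * (Γ * Real.exp (-z) * max (V - ε) 0) = Γ * max (V - ε) 0 := by
    linear_combination Γ * max (V - ε) 0 * he
  rw [hexp]
  exact (closed_loop_identity (W := max (V - ε) 0) rfl rfl).trans_le key
end
end
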